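/- Under the stated assumptions, the following statements are equivalent: (a) Λ_p = β ρ(K)^{1/θ} < 1; (b) A has a fixed point in L_p(X,π)_+; (c) there exists g ∈ L_p(X,π)_+ such that the sequence of iterates (A^n g)_{n∈ℕ} converges in L_p(X,π)-norm to an element of L_p(X,π)_+. -/

import Mathlib

open MeasureTheory Filter Topology ENNReal

/-- The spectral radius of a bounded linear operator, via the Gelfand formula
`ρ(K) = lim_n ‖K^n‖^(1/n) = inf_{n ≥ 1} ‖K^n‖^(1/n)`. -/
noncomputable def specRad {E : Type*} [NormedAddCommGroup E] [NormedSpace ℝ E]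
    (K : E →L[ℝ] E) : ℝ := ⨅ n : ℕ, ‖K ^ (n + 1)‖ ^ (1 / (n + 1) : ℝ)

/-!
Write `ρ` for the spectral radius of `K`. As `K` improves positivity and has a compact power, its
positive resolvents, which are unbounded near `ρ`, yield in the weak-* limit a strictly positive
functional `ψ` with `ψ ∘ K = ρ ψ`. A fixed point `g` of `A` satisfies `β ^ θ K g < g` if `θ > 0` and
`g < β ^ θ K g` if `θ < 0`; applying `ψ` gives `β ρ ^ (1 / θ) < 1` in both cases.

Conversely, `A` is monotone on the cone. For `θ > 0`, it is dominated by an affine map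
`g ↦ c K g + C` with `c ρ < 1`, and iterating `A` downwards from the fixed point of this map
converges to a fixed point, which stays above the constant `ξ₀ ^ θ`. For `θ < 0`, `A` is bounded
above, but its fixed points could degenerate to `0`; the perturbed operators `A + ε` have fixed
points decreasing with `ε`, and a limit `0` is impossible because, after normalisation, they would
asymptotically solve `β ^ θ K h + b = h` with `b ≥ 0`, although `β ^ θ ρ > 1`.
-/

section SpectralRadius

variable {E : Type*} [NormedAddCommGroup E] [NormedSpace ℝ E] {K : E →L[ℝ] E}

lemma specRad_nonneg (K : E →L[ℝ] E) : 0 ≤ specRad K :=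
  Real.iInf_nonneg fun n => by positivity

lemma specRad_le_norm_pow_rpow (K : E →L[ℝ] E) (n : ℕ) :
    specRad K ≤ ‖K ^ (n + 1)‖ ^ (1 / (n + 1) : ℝ) :=
  ciInf_le ⟨0, by rintro _ ⟨n, rfl⟩; positivity⟩ n

lemma exists_norm_pow_lt_pow_of_specRad_lt {r : ℝ} (hr : specRad K < r) :
    ∃ n : ℕ, ‖K ^ n‖ < r ^ n := by
  obtain ⟨n, hn⟩ := exists_lt_of_ciInf_lt hr
  have hroot : (‖K ^ (n + 1)‖ ^ (1 / (n + 1) : ℝ)) ^ (n + 1) = ‖K ^ (n + 1)‖ := by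
    rw [one_div, ← Nat.cast_add_one]
    exact Real.rpow_inv_natCast_pow (norm_nonneg _) n.succ_ne_zero
  exact ⟨n + 1, hroot ▸ pow_lt_pow_left₀ hn (by positivity) n.succ_ne_zero⟩

lemma le_specRad_of_pow_le_norm_pow {r : ℝ} (hr : 0 ≤ r) (h : ∀ n : ℕ, r ^ n ≤ ‖K ^ n‖) :
    r ≤ specRad K := by
  refine le_ciInf fun n => ?_
  rw [one_div, ← Nat.cast_add_one, ← Real.pow_rpow_inv_natCast hr n.succ_ne_zero]
  gcongr
  exact h (n + 1)

lemma specRad_le_of_norm_pow_le {C r : ℝ} (hr : 0 ≤ r) (h : ∀ n : ℕ, ‖K ^ n‖ ≤ C * r ^ n) :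
    specRad K ≤ r := by
  have hC : 0 ≤ C := by simpa using (norm_nonneg _).trans (h 0)
  have hbound (n : ℕ) : specRad K ≤ (C + 1) ^ (1 / ((n : ℝ) + 1)) * r := by
    calc specRad K ≤ ‖K ^ (n + 1)‖ ^ (1 / (n + 1) : ℝ) := specRad_le_norm_pow_rpow K n
      _ ≤ ((C + 1) * r ^ (n + 1)) ^ (1 / (n + 1) : ℝ) := by
        gcongr
        exact (h (n + 1)).trans (by gcongr; linarith)
      _ = (C + 1) ^ (1 / ((n : ℝ) + 1)) * r := by
        rw [Real.mul_rpow (by positivity) (by positivity)]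
        congr 1
        rw [one_div, ← Nat.cast_add_one, Real.pow_rpow_inv_natCast hr n.succ_ne_zero]
  have hlim : Tendsto (fun n : ℕ => (C + 1) ^ (1 / ((n : ℝ) + 1)) * r) atTop
      (𝓝 ((C + 1) ^ (0 : ℝ) * r)) :=
    (((Real.continuous_const_rpow (by positivity)).tendsto 0).comp
      tendsto_one_div_add_atTop_nhds_zero_nat).mul_const r
  rw [Real.rpow_zero, one_mul] at hlim
  exact ge_of_tendsto' hlim hbound

end SpectralRadius

section NormedLattice

lemma add_posPart_le {E : Type*} [AddCommGroup E] [Lattice E] [IsOrderedAddMonoid E] (x y : E) :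
    (x + y)⁺ ≤ x⁺ + y⁺ :=
  sup_le (add_le_add (le_posPart x) (le_posPart y))
    (add_nonneg (posPart_nonneg x) (posPart_nonneg y))

variable {E : Type*} [NormedAddCommGroup E] [Lattice E] [HasSolidNorm E] [IsOrderedAddMonoid E]

lemma norm_le_norm_of_nonneg_of_le {x y : E} (hx : 0 ≤ x) (hxy : x ≤ y) : ‖x‖ ≤ ‖y‖ :=
  norm_le_norm_of_abs_le_abs (by rwa [abs_of_nonneg hx, abs_of_nonneg (hx.trans hxy)])

lemma norm_posPart_le (x : E) : ‖x⁺‖ ≤ ‖x‖ :=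
  (norm_le_norm_of_nonneg_of_le (posPart_nonneg x)
    (sup_le (le_abs_self x) (abs_nonneg x))).trans_eq (norm_abs_eq_norm x)

end NormedLattice

section PositiveOperator

lemma posPart_smul_of_pos {E : Type*} [AddCommGroup E] [Module ℝ E] [Lattice E] [PosSMulMono ℝ E]
    {c : ℝ} (hc : 0 < c) (x : E) : (c • x)⁺ = c • x⁺ := by
  have hle {a : ℝ} (ha : 0 < a) (y : E) : (a • y)⁺ ≤ a • y⁺ :=
    sup_le (smul_le_smul_of_nonneg_left (le_posPart y) ha.le) (smul_nonneg ha.le (posPart_nonneg y))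
  refine (hle hc x).antisymm ?_
  simpa [smul_smul, hc.ne'] using
    smul_le_smul_of_nonneg_left (hle (inv_pos.2 hc) (c • x)) hc.le

variable {E : Type*} [NormedAddCommGroup E] [NormedSpace ℝ E]

lemma monotone_clm_pow [Preorder E] {T : E →L[ℝ] E} (hT : Monotone T) (n : ℕ) :
    Monotone ⇑(T ^ n) := by
  rw [FunLike.coe_pow_eq_iterate]
  exact hT.iterate n

lemma monotone_geom_sum [PartialOrder E] [IsOrderedAddMonoid E] {T : E →L[ℝ] E}
    (hT : Monotone T) (n : ℕ) : Monotone ⇑(∑ i ∈ Finset.range n, T ^ i) := by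
  refine (monotone_iff_map_nonneg _).2 fun x hx => ?_
  rw [sum_apply]
  exact Finset.sum_nonneg fun i _ => map_zero (T ^ i) ▸ monotone_clm_pow hT i hx

lemma le_pow_apply_add_geom_sum_apply [PartialOrder E] [IsOrderedAddMonoid E] {T : E →L[ℝ] E}
    (hT : Monotone T) {x y : E} (h : x ≤ T x + y) (n : ℕ) :
    x ≤ (T ^ n) x + (∑ i ∈ Finset.range n, T ^ i) y := by
  have htelescope : (∑ i ∈ Finset.range n, T ^ i) (x - T x) = x - (T ^ n) x :=
    DFunLike.congr_fun (geom_sum_mul_neg T n) x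
  rw [← sub_le_iff_le_add', ← htelescope]
  exact monotone_geom_sum hT n (sub_le_iff_le_add'.2 h)

lemma abs_map_le_map_abs [Lattice E] {T : E →L[ℝ] E} (hT : Monotone T) (x : E) : |T x| ≤ T |x| :=
  abs_le'.2 ⟨hT (le_abs_self x), (map_neg T x).ge.trans (hT (neg_le_abs x))⟩

variable [PartialOrder E] [PosSMulMono ℝ E] {K : E →L[ℝ] E}

lemma pow_apply_le_pow_smul (hK : Monotone K) {r : ℝ} (hr : 0 ≤ r) {x : E}
    (hx : K x ≤ r • x) (n : ℕ) : (K ^ n) x ≤ r ^ n • x := by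
  induction n with
  | zero => simp
  | succ n ih =>
    calc (K ^ (n + 1)) x = K ((K ^ n) x) := by rw [pow_succ', mul_apply_eq_comp]
      _ ≤ r ^ n • K x := (hK ih).trans_eq (map_smul K _ _)
      _ ≤ r ^ n • r • x := smul_le_smul_of_nonneg_left hx (by positivity)
      _ = r ^ (n + 1) • x := by rw [smul_smul, pow_succ]

lemma pow_smul_le_pow_apply (hK : Monotone K) {r : ℝ} (hr : 0 ≤ r) {x : E}
    (hx : r • x ≤ K x) (n : ℕ) : r ^ n • x ≤ (K ^ n) x := by
  induction n with
  | zero => simp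
  | succ n ih =>
    calc r ^ (n + 1) • x = r ^ n • r • x := by rw [smul_smul, pow_succ]
      _ ≤ r ^ n • K x := smul_le_smul_of_nonneg_left hx (by positivity)
      _ ≤ K ((K ^ n) x) := (map_smul K _ _).ge.trans (hK ih)
      _ = (K ^ (n + 1)) x := by rw [pow_succ', mul_apply_eq_comp]

end PositiveOperator

section BanachLattice

variable {E : Type*} [NormedAddCommGroup E] [NormedSpace ℝ E] [Lattice E] [HasSolidNorm E]
  [IsOrderedAddMonoid E]

lemma norm_map_le_norm_map_abs {T : E →L[ℝ] E} (hT : Monotone T) (x : E) : ‖T x‖ ≤ ‖T |x|‖ :=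
  (norm_abs_eq_norm (T x)).ge.trans
    (norm_le_norm_of_nonneg_of_le (abs_nonneg _) (abs_map_le_map_abs hT x))

lemma opNorm_le_opNorm_of_monotone {S T : E →L[ℝ] E} (hT : Monotone T)
    (h : ∀ x, 0 ≤ x → T x ≤ S x) : ‖T‖ ≤ ‖S‖ := by
  refine T.opNorm_le_bound (norm_nonneg _) fun x => ?_
  have hTx : 0 ≤ T |x| := map_zero T ▸ hT (abs_nonneg x)
  calc ‖T x‖ ≤ ‖T |x|‖ := norm_map_le_norm_map_abs hT x
    _ ≤ ‖S |x|‖ := norm_le_norm_of_nonneg_of_le hTx (h _ (abs_nonneg x))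
    _ ≤ ‖S‖ * ‖|x|‖ := S.le_opNorm _
    _ = ‖S‖ * ‖x‖ := by rw [norm_abs_eq_norm]

variable [PosSMulMono ℝ E]

lemma le_specRad_of_smul_le {K : E →L[ℝ] E} (hK : Monotone K) {r : ℝ} (hr : 0 ≤ r) {x : E}
    (hx0 : 0 < x) (hx : r • x ≤ K x) : r ≤ specRad K := by
  refine le_specRad_of_pow_le_norm_pow hr fun n => ?_
  refine le_of_mul_le_mul_right ?_ (norm_pos_iff.2 hx0.ne')
  calc r ^ n * ‖x‖ = ‖r ^ n • x‖ := by rw [norm_smul, Real.norm_of_nonneg (by positivity)]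
    _ ≤ ‖(K ^ n) x‖ := norm_le_norm_of_nonneg_of_le (smul_nonneg (by positivity) hx0.le)
      (pow_smul_le_pow_apply hK hr hx n)
    _ ≤ ‖K ^ n‖ * ‖x‖ := (K ^ n).le_opNorm x

lemma exists_monotone_dual_apply_eq_norm {x : E} (hx : 0 ≤ x) :
    ∃ φ : StrongDual ℝ E, Monotone φ ∧ ‖φ‖ ≤ 1 ∧ φ x = ‖x‖ := by
  obtain rfl | hx0 := eq_or_ne x 0
  · exact ⟨0, monotone_const, by simp, by simp⟩
  -- Dominating by `‖y⁺‖` instead of `‖y‖` makes the Hahn-Banach extension monotone.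
  obtain ⟨g, hgx, hg⟩ := exists_extension_of_le_sublinear
    (LinearPMap.mkSpanSingleton x ‖x‖ hx0) (fun y => ‖y⁺‖)
    (fun c hc y => by rw [posPart_smul_of_pos hc, norm_smul, Real.norm_of_nonneg hc.le])
    (fun y z => (norm_le_norm_of_nonneg_of_le (posPart_nonneg _) (add_posPart_le y z)).trans
      (norm_add_le _ _))
    (by
      rintro ⟨y, hy⟩
      obtain ⟨c, rfl⟩ := Submodule.mem_span_singleton.1 hy
      rw [LinearPMap.mkSpanSingleton'_apply]
      obtain hc | hc := le_or_gt c 0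
      · exact (mul_nonpos_of_nonpos_of_nonneg hc (norm_nonneg x)).trans (norm_nonneg _)
      · simp [posPart_smul_of_pos hc, posPart_of_nonneg hx, norm_smul, abs_of_pos hc])
  refine ⟨g.mkContinuous 1 fun y => ?_, (monotone_iff_map_nonneg _).2 fun y hy => ?_,
    LinearMap.mkContinuous_norm_le _ zero_le_one _, ?_⟩
  · rw [Real.norm_eq_abs, one_mul]
    refine abs_le'.2 ⟨(hg y).trans (norm_posPart_le y), ?_⟩
    rw [← map_neg, ← norm_neg y]
    exact (hg _).trans (norm_posPart_le (-y))
  · have hneg := hg (-y)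
    rw [posPart_of_nonpos (neg_nonpos.2 hy), norm_zero, map_neg] at hneg
    exact neg_nonpos.1 hneg
  · exact (hgx ⟨x, Submodule.mem_span_singleton_self x⟩).trans
      (LinearPMap.mkSpanSingleton_apply ℝ ℝ hx0 _)

lemma exists_monotone_dual_lt_norm_comp {R : E →L[ℝ] E} (hR : Monotone R) {r : ℝ} (hr : r < ‖R‖) :
    ∃ φ : StrongDual ℝ E, Monotone φ ∧ ‖φ‖ ≤ 1 ∧ r < ‖φ.comp R‖ := by
  obtain ⟨x, hx, hrx⟩ := R.exists_lt_apply_of_lt_opNorm hr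
  obtain ⟨φ, hφ, hφ1, hφx⟩ :=
    exists_monotone_dual_apply_eq_norm (map_zero R ▸ hR (abs_nonneg x) : 0 ≤ R |x|)
  refine ⟨φ, hφ, hφ1, ?_⟩
  calc r < ‖R |x|‖ := hrx.trans_le (norm_map_le_norm_map_abs hR x)
    _ = (φ.comp R) |x| := hφx.symm
    _ ≤ ‖φ.comp R‖ * ‖|x|‖ := (Real.le_norm_self _).trans ((φ.comp R).le_opNorm _)
    _ ≤ ‖φ.comp R‖ := by
      rw [norm_abs_eq_norm]
      exact mul_le_of_le_one_right (norm_nonneg _) hx.le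

end BanachLattice

section Resolvent

variable {E : Type*} [NormedAddCommGroup E] [NormedSpace ℝ E] [Lattice E] [HasSolidNorm E]
  [IsOrderedAddMonoid E]

lemma monotone_tsum_pow [CompleteSpace E] {T : E →L[ℝ] E} (hT : Monotone T) (h : ‖T‖ < 1) :
    Monotone ⇑(∑' n : ℕ, T ^ n) := by
  refine (monotone_iff_map_nonneg _).2 fun x hx => ?_
  have hsum : HasSum (fun n : ℕ => (T ^ n) x) ((∑' n : ℕ, T ^ n) x) :=
    (ContinuousLinearMap.apply ℝ E x).hasSum (summable_geometric_of_norm_lt_one h).hasSum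
  exact hsum.nonneg fun n => map_zero (T ^ n) ▸ monotone_clm_pow hT n hx

lemma exists_monotone_inverse_one_sub [CompleteSpace E] {T : E →L[ℝ] E} (hT : Monotone T)
    {n : ℕ} (hn : ‖T ^ n‖ < 1) :
    ∃ R : E →L[ℝ] E, Monotone R ∧ (1 - T) * R = 1 ∧ R * (1 - T) = 1 := by
  set P := ∑ i ∈ Finset.range n, T ^ i
  set M := ∑' i : ℕ, (T ^ n) ^ i
  have hM : Monotone M := monotone_tsum_pow (monotone_clm_pow hT n) hn
  have hright : (1 - T) * (P * M) = 1 := by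
    rw [← mul_assoc, mul_neg_geom_sum, mul_neg_geom_series _ hn]
  have hleft : (M * P) * (1 - T) = 1 := by
    rw [mul_assoc, geom_sum_mul_neg, geom_series_mul_neg _ hn]
  exact ⟨P * M, (monotone_geom_sum hT n).comp hM, hright,
    left_inv_eq_right_inv hleft hright ▸ hleft⟩

variable [PosSMulMono ℝ E]

lemma specRad_le_of_monotone_rightInverse {K V : E →L[ℝ] E} (hK : Monotone K) (hV : Monotone V)
    {s : ℝ} (hs : 0 < s) (hKV : (s • 1 - K) * V = 1) : specRad K ≤ s := by
  have hsV (x : E) : s • V x = x + K (V x) := by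
    rw [← sub_eq_iff_eq_add]
    exact DFunLike.congr_fun hKV x
  have hpow (n : ℕ) (x : E) (hx : 0 ≤ x) : (K ^ n) x ≤ (s ^ (n + 1) • V) x := by
    have hKVx : 0 ≤ K (V x) := map_zero K ▸ hK (map_zero V ▸ hV hx)
    calc (K ^ n) x ≤ (K ^ n) (s • V x) :=
        monotone_clm_pow hK n (le_of_le_of_eq (le_add_of_nonneg_right hKVx) (hsV x).symm)
      _ = s • (K ^ n) (V x) := map_smul _ _ _
      _ ≤ s • s ^ n • V x := smul_le_smul_of_nonneg_left (pow_apply_le_pow_smul hK hs.le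
        (le_of_le_of_eq (le_add_of_nonneg_left hx) (hsV x).symm) n) hs.le
      _ = (s ^ (n + 1) • V) x := by rw [smul_smul, pow_succ']; rfl
  refine specRad_le_of_norm_pow_le (C := s * ‖V‖) hs.le fun n => ?_
  calc ‖K ^ n‖ ≤ ‖s ^ (n + 1) • V‖ := opNorm_le_opNorm_of_monotone (monotone_clm_pow hK n) (hpow n)
    _ = s * ‖V‖ * s ^ n := by
      rw [norm_smul, Real.norm_of_nonneg (by positivity)]
      ring

variable [CompleteSpace E]

lemma exists_monotone_resolvent {K : E →L[ℝ] E} (hK : Monotone K) {r : ℝ} (hr : specRad K < r) :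
    ∃ R : E →L[ℝ] E, Monotone R ∧ (r • 1 - K) * R = 1 ∧ R * (r • 1 - K) = 1 := by
  have hr0 : 0 < r := (specRad_nonneg K).trans_lt hr
  obtain ⟨n, hn⟩ := exists_norm_pow_lt_pow_of_specRad_lt hr
  have hsmul {T : E →L[ℝ] E} (hT : Monotone T) : Monotone ⇑(r⁻¹ • T) :=
    hT.const_smul (inv_pos.2 hr0).le
  obtain ⟨R, hR, hright, hleft⟩ := exists_monotone_inverse_one_sub (hsmul hK) (n := n) <| by
    rw [smul_pow, norm_smul, norm_pow, norm_inv, Real.norm_of_nonneg hr0.le, inv_pow]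
    exact (inv_mul_lt_one₀ (by positivity)).2 hn
  have hfactor : r • (1 : E →L[ℝ] E) - K = r • (1 - r⁻¹ • K) := by
    rw [smul_sub, smul_inv_smul₀ hr0.ne']
  refine ⟨r⁻¹ • R, hsmul hR, ?_, ?_⟩
  · rw [hfactor, smul_mul_smul_comm, mul_inv_cancel₀ hr0.ne', one_smul, hright]
  · rw [hfactor, smul_mul_smul_comm, inv_mul_cancel₀ hr0.ne', one_smul, hleft]

/- If `(r - ρ) ‖R‖ < 1`, a Neumann series continues the positive resolvent from `r` to some
`s < ρ`, which is impossible. -/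
lemma one_le_sub_specRad_mul_norm_resolvent {K R : E →L[ℝ] E} (hK : Monotone K) (hR : Monotone R)
    (hρ : 0 < specRad K) {r : ℝ} (hr : specRad K < r) (hKR : (r • 1 - K) * R = 1) :
    1 ≤ (r - specRad K) * ‖R‖ := by
  by_contra! hlt
  obtain ⟨t, ⟨hrt, htr⟩, ht⟩ : ∃ t, (r - specRad K < t ∧ t < r) ∧ t * ‖R‖ < 1 := by
    have hcont : ContinuousAt (fun t => t * ‖R‖) (r - specRad K) := by fun_prop
    have hsmall : ∀ᶠ t in 𝓝[>] (r - specRad K), t * ‖R‖ < 1 :=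
      nhdsWithin_le_nhds (hcont.eventually_lt_const hlt)
    exact (Eventually.and (Ioo_mem_nhdsGT (sub_lt_self r hρ)) hsmall).exists
  have ht0 : 0 < t := by linarith
  obtain ⟨S, hS, hRS, -⟩ := exists_monotone_inverse_one_sub (T := t • R) (n := 1)
    (hR.const_smul ht0.le) (by rwa [pow_one, norm_smul, Real.norm_of_nonneg ht0.le])
  have hinv : ((r - t) • 1 - K) * (R * S) = 1 := by
    have hshift : ((r - t) • 1 - K) * R = 1 - t • R := by
      rw [sub_smul, sub_right_comm, sub_mul, hKR, smul_one_mul]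
    rw [← mul_assoc, hshift, hRS]
  have hle : specRad K ≤ r - t :=
    specRad_le_of_monotone_rightInverse (V := R * S) hK (hR.comp hS) (by linarith) hinv
  linarith

end Resolvent

section KreinRutman

section WeakStar

variable {E : Type*} [NormedAddCommGroup E] [NormedSpace ℝ E] {ι : Type*}

lemma exists_tendsto_apply_of_norm_le (l : Ultrafilter ι) {χ : ι → StrongDual ℝ E} {r : ℝ}
    (hχ : ∀ i, ‖χ i‖ ≤ r) : ∃ ψ : StrongDual ℝ E, ∀ x, Tendsto (fun i => χ i x) l (𝓝 (ψ x)) := by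
  obtain ⟨ψ, -, hψ⟩ := isCompact_iff_ultrafilter_le_nhds.1
    (WeakDual.isCompact_closedBall (𝕜 := ℝ) (E := E) 0 r)
    (l.map fun i => StrongDual.toWeakDual (χ i))
    (le_principal_iff.2 (mem_map.2 (univ_mem' fun i => by simp [hχ i])))
  exact ⟨WeakDual.toStrongDual ψ, fun x => ((WeakDual.eval_continuous x).tendsto ψ).comp hψ⟩

lemma tendsto_norm_comp_of_isCompactOperator {l : Filter ι} {χ : ι → StrongDual ℝ E} {r : ℝ}
    (hχ : ∀ i, ‖χ i‖ ≤ r) (hlim : ∀ x, Tendsto (fun i => χ i x) l (𝓝 0)) {T : E →L[ℝ] E}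
    (hT : IsCompactOperator T) : Tendsto (fun i => ‖(χ i).comp T‖) l (𝓝 0) := by
  obtain ⟨S, hS, hTS⟩ := hT.image_closedBall_subset_compact (f := (T : E →ₗ[ℝ] E)) 1
  have hequi : EquicontinuousOn (fun i => ⇑(χ i)) S :=
    (LipschitzWith.uniformEquicontinuous _ r.toNNReal fun i => (χ i).lipschitz.weaken
      (NNReal.le_toNNReal_of_coe_le (hχ i))).equicontinuous.equicontinuousOn S
  have hunif : TendstoUniformlyOn (fun i => ⇑(χ i)) 0 l S :=
    UniformOnFun.tendsto_iff_tendstoUniformlyOn.1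
      ((EquicontinuousOn.tendsto_uniformOnFun_iff_pi' (𝔖 := {S}) (by simpa) (by simpa) l 0).2
        (tendsto_pi_nhds.2 fun x => hlim x)) S rfl
  rw [Metric.tendstoUniformlyOn_iff] at hunif
  refine tendsto_order.2 ⟨fun a ha => .of_forall fun i => ha.trans_le (norm_nonneg _),
    fun ε hε => ?_⟩
  filter_upwards [hunif (ε / 2) (by positivity)] with i hi
  refine lt_of_le_of_lt (ContinuousLinearMap.opNorm_le_of_unit_norm (by positivity) fun x hx => ?_)
    (half_lt_self hε)
  simpa using (hi (T x) (hTS ⟨x, by simp [hx], rfl⟩)).le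

end WeakStar

section Dual

variable {E : Type*} [NormedAddCommGroup E] [NormedSpace ℝ E]

lemma tendsto_norm_comp_pow_sub {K : E →L[ℝ] E} {ι : Type*} {l : Filter ι} {ρ : ℝ}
    {χ : ι → StrongDual ℝ E} (h : Tendsto (fun i => ‖(χ i).comp K - ρ • χ i‖) l (𝓝 0)) (n : ℕ) :
    Tendsto (fun i => ‖(χ i).comp (K ^ n) - ρ ^ n • χ i‖) l (𝓝 0) := by
  induction n with
  | zero => simpa [ContinuousLinearMap.one_def] using tendsto_const_nhds
  | succ n ih =>
    have hsplit (i : ι) : (χ i).comp (K ^ (n + 1)) - ρ ^ (n + 1) • χ i =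
        ((χ i).comp (K ^ n) - ρ ^ n • χ i).comp K + ρ ^ n • ((χ i).comp K - ρ • χ i) := by
      ext x
      simp [pow_succ]
      ring
    have hbound := (ih.mul_const ‖K‖).add (h.const_mul |ρ ^ n|)
    rw [zero_mul, mul_zero, add_zero] at hbound
    refine squeeze_zero (fun i => norm_nonneg _) (fun i => ?_) hbound
    rw [hsplit i]
    exact norm_add_le_of_le (ContinuousLinearMap.opNorm_comp_le _ _) (norm_smul _ _).le

end Dual

variable {E : Type*} [NormedAddCommGroup E] [NormedSpace ℝ E] [Lattice E] [HasSolidNorm E]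
  [IsOrderedAddMonoid E] [PosSMulMono ℝ E] [CompleteSpace E] {K : E →L[ℝ] E}

lemma exists_monotone_dual_norm_comp_sub_le (hK : Monotone K) (hρ : 0 < specRad K) {δ : ℝ}
    (hδ : 0 < δ) : ∃ χ : StrongDual ℝ E,
      Monotone χ ∧ ‖χ‖ = 1 ∧ ‖χ.comp K - specRad K • χ‖ ≤ 3 * δ := by
  obtain ⟨R, hR, hKR, hRK⟩ := exists_monotone_resolvent hK (lt_add_of_pos_right (specRad K) hδ)
  have hnormR : (2 * δ)⁻¹ < ‖R‖ := by
    have h1 := one_le_sub_specRad_mul_norm_resolvent hK hR hρ (lt_add_of_pos_right _ hδ) hKR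
    rw [add_sub_cancel_left] at h1
    rw [inv_lt_iff_one_lt_mul₀ (by positivity)]
    linarith
  obtain ⟨φ, hφ, hφ1, hφR⟩ := exists_monotone_dual_lt_norm_comp hR hnormR
  set χ := φ.comp R
  have hχ0 : 0 < ‖χ‖ := (by positivity : (0 : ℝ) < (2 * δ)⁻¹).trans hφR
  have heq : χ.comp K - specRad K • χ = δ • χ - φ := by
    have hφ' : (specRad K + δ) • χ - χ.comp K = φ := by
      ext x
      simpa [χ] using congrArg φ (DFunLike.congr_fun hRK x)
    rw [← hφ', add_smul]
    abel
  refine ⟨‖χ‖⁻¹ • χ, (hφ.comp hR).const_smul (inv_pos.2 hχ0).le, ?_, ?_⟩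
  · rw [norm_smul, norm_inv, norm_norm, inv_mul_cancel₀ hχ0.ne']
  · have hscale : (‖χ‖⁻¹ • χ).comp K - specRad K • ‖χ‖⁻¹ • χ = ‖χ‖⁻¹ • (δ • χ - φ) := by
      rw [← heq, ContinuousLinearMap.smul_comp, smul_sub, smul_comm]
    calc ‖(‖χ‖⁻¹ • χ).comp K - specRad K • ‖χ‖⁻¹ • χ‖ = ‖χ‖⁻¹ * ‖δ • χ - φ‖ := by
          rw [hscale, norm_smul, norm_inv, norm_norm]
      _ ≤ ‖χ‖⁻¹ * (δ * ‖χ‖ + 1) := by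
          gcongr
          refine norm_sub_le_of_le ?_ hφ1
          rw [norm_smul, Real.norm_of_nonneg hδ.le]
      _ = δ + ‖χ‖⁻¹ := by field_simp
      _ ≤ 3 * δ := by
          have := inv_anti₀ (by positivity) hφR.le
          rw [inv_inv] at this
          linarith

theorem exists_monotone_dual_eigenvector (hK : Monotone K) (hρ : 0 < specRad K) {n : ℕ}
    (hn : IsCompactOperator ⇑(K ^ n)) :
    ∃ ψ : StrongDual ℝ E, Monotone ψ ∧ ψ ≠ 0 ∧ ∀ x, ψ (K x) = specRad K * ψ x := by
  choose χ hχ hχ1 hχK using fun j : ℕ =>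
    exists_monotone_dual_norm_comp_sub_le hK hρ (Nat.one_div_pos_of_nat (α := ℝ) (n := j))
  set l : Ultrafilter ℕ := hyperfilter ℕ
  obtain ⟨ψ, hψ⟩ := exists_tendsto_apply_of_norm_le l fun j => (hχ1 j).le
  have happrox : Tendsto (fun j => ‖(χ j).comp K - specRad K • χ j‖) l (𝓝 0) := by
    refine squeeze_zero (fun j => norm_nonneg _) hχK ?_
    simpa using (tendsto_one_div_add_atTop_nhds_zero_nat (𝕜 := ℝ)).const_mul 3 |>.mono_left
      Nat.hyperfilter_le_atTop
  refine ⟨ψ, fun x y hxy => le_of_tendsto_of_tendsto' (hψ x) (hψ y) fun j => hχ j hxy, ?_,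
    fun x => ?_⟩
  · rintro rfl
    have hcomp := tendsto_norm_comp_of_isCompactOperator (fun j => (hχ1 j).le) hψ hn
    have hsum := (tendsto_norm_comp_pow_sub happrox n).add hcomp
    rw [add_zero] at hsum
    have hlower (j : ℕ) : specRad K ^ n ≤
        ‖(χ j).comp (K ^ n) - specRad K ^ n • χ j‖ + ‖(χ j).comp (K ^ n)‖ := by
      have := norm_le_norm_sub_add (specRad K ^ n • χ j) ((χ j).comp (K ^ n))
      rwa [norm_smul, hχ1, mul_one, Real.norm_of_nonneg (by positivity), norm_sub_rev] at this
    exact (pow_pos hρ n).not_ge (ge_of_tendsto' hsum hlower)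
  · have hzero : Tendsto (fun j => χ j (K x) - specRad K * χ j x) l (𝓝 0) := by
      refine squeeze_zero_norm (fun j => ((χ j).comp K - specRad K • χ j).le_opNorm x) ?_
      simpa using happrox.mul_const ‖x‖
    exact sub_eq_zero.1 (tendsto_nhds_unique ((hψ (K x)).sub ((hψ x).const_mul _)) hzero)

end KreinRutman

section LpOrder

variable {X : Type*} [MeasurableSpace X] {π : Measure X} {p : ℝ≥0∞}

lemma lt_of_ae_lt [NeZero π] {f g : Lp ℝ p π} (h : ∀ᵐ x ∂π, f x < g x) : f < g := by
  refine ((Lp.coeFn_le f g).1 (h.mono fun _ hx => hx.le)).lt_of_ne ?_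
  rintro rfl
  exact h.exists.elim fun _ hx => hx.false

lemma ae_forall_abs_le {ι : Type*} [Countable ι] {f : ι → Lp ℝ p π} {F : Lp ℝ p π}
    (hF : ∀ i, |f i| ≤ F) : ∀ᵐ x ∂π, ∀ i, |f i x| ≤ F x := by
  refine ae_all_iff.2 fun i => ?_
  filter_upwards [(Lp.coeFn_le _ _).2 (hF i), Lp.coeFn_abs (f i)] with x hx habs
  exact habs ▸ hx

variable [Fact (1 ≤ p)]

instance instPosSMulMonoLp : PosSMulMono ℝ (Lp ℝ p π) where
  smul_le_smul_of_nonneg_left c hc f g hfg := by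
    rw [← Lp.coeFn_le] at hfg ⊢
    filter_upwards [hfg, Lp.coeFn_smul c f, Lp.coeFn_smul c g] with x hx hfx hgx
    rw [hfx, hgx]
    exact mul_le_mul_of_nonneg_left hx hc

lemma tendsto_Lp_of_abs_le (hp : p ≠ ⊤) {f : ℕ → Lp ℝ p π} {g F : Lp ℝ p π}
    (hF : ∀ n, |f n| ≤ F) (hlim : ∀ᵐ x ∂π, Tendsto (fun n => f n x) atTop (𝓝 (g x))) :
    Tendsto f atTop (𝓝 g) := by
  have hbound (n : ℕ) (s : Set X) :
      eLpNorm (s.indicator (f n)) p π ≤ eLpNorm (s.indicator F) p π := by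
    refine eLpNorm_mono_ae ?_
    filter_upwards [ae_forall_abs_le hF] with x hx
    simp only [norm_indicator_eq_indicator_norm]
    exact Set.indicator_le_indicator ((hx n).trans (le_abs_self _))
  rw [Lp.tendsto_Lp_iff_tendsto_eLpNorm']
  refine tendsto_Lp_of_tendsto_ae Fact.out hp (fun n => Lp.aestronglyMeasurable _) (Lp.memLp g)
    (fun ε hε => ?_) (fun ε hε => ?_) hlim
  · obtain ⟨δ, hδ, h⟩ := unifIntegrable_const (ι := ℕ) Fact.out hp (Lp.memLp F) hε
    exact ⟨δ, hδ, fun n s hs hsδ => (hbound n s).trans (h n s hs hsδ)⟩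
  · obtain ⟨s, hs, h⟩ := unifTight_const (ι := ℕ) hp (Lp.memLp F) hε
    exact ⟨s, hs, fun n => (hbound n sᶜ).trans (h n)⟩

lemma exists_tendsto_Lp_of_monotone (hp : p ≠ ⊤) {f : ℕ → Lp ℝ p π} {u : Lp ℝ p π}
    (hf : Monotone f) (hf0 : ∀ n, 0 ≤ f n) (hu : ∀ n, f n ≤ u) : ∃ g, Tendsto f atTop (𝓝 g) := by
  have habs (n : ℕ) : |f n| ≤ u := (abs_of_nonneg (hf0 n)).trans_le (hu n)
  have hsup : ∀ᵐ x ∂π, Tendsto (fun n => f n x) atTop (𝓝 (⨆ n, f n x)) := by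
    filter_upwards [ae_all_iff.2 fun n : ℕ => (Lp.coeFn_le _ _).2 (hf n.le_succ),
      ae_forall_abs_le habs] with x hmono hbound
    exact tendsto_atTop_ciSup (monotone_nat_of_le_succ hmono)
      ⟨u x, Set.forall_mem_range.2 fun n => (le_abs_self _).trans (hbound n)⟩
  have hmem : MemLp (fun x => ⨆ n, f n x) p π := by
    refine (Lp.memLp u).mono'
      (aestronglyMeasurable_of_tendsto_ae atTop (fun n => Lp.aestronglyMeasurable (f n)) hsup) ?_
    filter_upwards [ae_forall_abs_le habs, hsup] with x hbound hx
    exact le_of_tendsto' hx.abs hbound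
  refine ⟨hmem.toLp, tendsto_Lp_of_abs_le hp habs ?_⟩
  filter_upwards [hsup, hmem.coeFn_toLp] with x hx hcoe
  rwa [hcoe]

lemma exists_tendsto_Lp_of_antitone (hp : p ≠ ⊤) {f : ℕ → Lp ℝ p π} (hf : Antitone f)
    (hf0 : ∀ n, 0 ≤ f n) : ∃ g, Tendsto f atTop (𝓝 g) := by
  obtain ⟨g, hg⟩ := exists_tendsto_Lp_of_monotone (f := fun n => f 0 - f n) hp
    (fun m n hmn => sub_le_sub_left (hf hmn) _) (fun n => sub_nonneg.2 (hf n.zero_le))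
    (fun n => sub_le_self _ (hf0 n))
  exact ⟨f 0 - g, by simpa using hg.const_sub (f 0)⟩

lemma exists_subseq_tendsto_ae {f : ℕ → Lp ℝ p π} {g : Lp ℝ p π} (h : Tendsto f atTop (𝓝 g)) :
    ∃ ns : ℕ → ℕ, StrictMono ns ∧ ∀ᵐ x ∂π, Tendsto (fun i => f (ns i) x) atTop (𝓝 (g x)) :=
  (tendstoInMeasure_of_tendsto_Lp h).exists_seq_tendsto_ae

end LpOrder

section PositiveCone

variable {X : Type*} [MeasurableSpace X] {π : Measure X} {p : ℝ≥0∞}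

/-- The cone `L_p(X,π)_+` of almost everywhere strictly positive functions. It is smaller than the
order cone `{g | 0 ≤ g}` of `L_p`, and in general has empty interior. -/
def strictlyPositiveCone (p : ℝ≥0∞) (π : Measure X) : Set (Lp ℝ p π) :=
  {g | ∀ᵐ x ∂π, 0 < g x}

lemma mem_strictlyPositiveCone {g : Lp ℝ p π} :
    g ∈ strictlyPositiveCone p π ↔ ∀ᵐ x ∂π, 0 < g x := Iff.rfl

lemma nonneg_of_mem_strictlyPositiveCone {g : Lp ℝ p π} (hg : g ∈ strictlyPositiveCone p π) :
    0 ≤ g :=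
  (Lp.coeFn_nonneg g).1 ((mem_strictlyPositiveCone.1 hg).mono fun _ hx => hx.le)

lemma pos_of_mem_strictlyPositiveCone [NeZero π] {g : Lp ℝ p π}
    (hg : g ∈ strictlyPositiveCone p π) : 0 < g :=
  lt_of_ae_lt <| by
    filter_upwards [hg, Lp.coeFn_zero ℝ p π] with x hx hx0
    rwa [hx0]

lemma isUpperSet_strictlyPositiveCone : IsUpperSet (strictlyPositiveCone p π) := by
  intro f g hfg hf
  filter_upwards [hf, (Lp.coeFn_le f g).2 hfg] with x hx hle
  exact hx.trans_le hle

lemma const_mem_strictlyPositiveCone [IsFiniteMeasure π] {c : ℝ} (hc : 0 < c) :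
    Lp.const p π c ∈ strictlyPositiveCone p π := by
  filter_upwards [Lp.coeFn_const (p := p) (μ := π) c] with x hx
  rwa [hx]

variable [Fact (1 ≤ p)]

lemma tendsto_inf_natCast_smul (hp : p ≠ ⊤) {f g : Lp ℝ p π} (hf : 0 ≤ f)
    (hg : g ∈ strictlyPositiveCone p π) :
    Tendsto (fun n : ℕ => f ⊓ (n : ℝ) • g) atTop (𝓝 f) := by
  refine tendsto_Lp_of_abs_le (F := f) hp (fun n => ?_) ?_
  · rw [abs_of_nonneg (le_inf hf (smul_nonneg n.cast_nonneg
      (nonneg_of_mem_strictlyPositiveCone hg)))]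
    exact inf_le_left
  · have hcoe : ∀ᵐ x ∂π, ∀ n : ℕ, (f ⊓ (n : ℝ) • g) x = min (f x) (n * g x) := by
      refine ae_all_iff.2 fun n => ?_
      filter_upwards [Lp.coeFn_inf f ((n : ℝ) • g), Lp.coeFn_smul (n : ℝ) g] with x hinf hsmul
      rw [hinf, Pi.inf_apply, hsmul, Pi.smul_apply, smul_eq_mul]
    filter_upwards [hcoe, hg] with x hx hgx
    have htop : Tendsto (fun n : ℕ => (n : ℝ) * g x) atTop atTop :=
      tendsto_natCast_atTop_atTop.atTop_mul_const hgx
    refine tendsto_const_nhds.congr' ?_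
    filter_upwards [htop.eventually_ge_atTop (f x)] with n hn
    rw [hx, min_eq_left hn]

/-- Positive operators that send every nonzero element of the order cone into `L_p(X,π)_+`. -/
def IsPositivityImproving (K : Lp ℝ p π →L[ℝ] Lp ℝ p π) : Prop :=
  ∀ ⦃f : Lp ℝ p π⦄, 0 < f → K f ∈ strictlyPositiveCone p π

lemma IsPositivityImproving.monotone {K : Lp ℝ p π →L[ℝ] Lp ℝ p π}
    (hK : IsPositivityImproving K) : Monotone K := by
  refine (monotone_iff_map_nonneg K).2 fun f hf => ?_
  obtain rfl | hf := hf.eq_or_lt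
  · rw [map_zero]
  · exact nonneg_of_mem_strictlyPositiveCone (hK hf)

lemma IsPositivityImproving.mapsTo [NeZero π] {K : Lp ℝ p π →L[ℝ] Lp ℝ p π}
    (hK : IsPositivityImproving K) :
    Set.MapsTo K (strictlyPositiveCone p π) (strictlyPositiveCone p π) :=
  fun _ hf => hK (pos_of_mem_strictlyPositiveCone hf)

lemma strictMono_of_dual_eigenvector (hp : p ≠ ⊤) {K : Lp ℝ p π →L[ℝ] Lp ℝ p π}
    (hK : IsPositivityImproving K) {ψ : StrongDual ℝ (Lp ℝ p π)} (hψ : Monotone ψ) (hψ0 : ψ ≠ 0)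
    {ρ : ℝ} (hρ : 0 < ρ) (hψK : ∀ f, ψ (K f) = ρ * ψ f) : StrictMono ψ := by
  refine (strictMono_iff_map_pos ψ).2 fun f hf => ?_
  obtain ⟨g, hg, hψg⟩ : ∃ g, 0 ≤ g ∧ 0 < ψ g := by
    by_contra! hneg
    refine hψ0 (ContinuousLinearMap.ext fun g => ?_)
    have hzero {h : Lp ℝ p π} (hh : 0 ≤ h) : ψ h = 0 :=
      (hneg h hh).antisymm (map_zero ψ ▸ hψ hh)
    rw [← posPart_sub_negPart g, map_sub, hzero (posPart_nonneg g), hzero (negPart_nonneg g),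
      sub_zero, zero_apply]
  obtain ⟨n, hn⟩ := (((ψ.continuous.tendsto g).comp
    (tendsto_inf_natCast_smul hp hg (hK hf))).eventually_const_lt hψg).exists
  have hpos : 0 < n * (ρ * ψ f) :=
    calc 0 < ψ (g ⊓ (n : ℝ) • K f) := hn
      _ ≤ ψ ((n : ℝ) • K f) := hψ inf_le_right
      _ = n * (ρ * ψ f) := by rw [map_smul, smul_eq_mul, hψK]
  exact pos_of_mul_pos_right (pos_of_mul_pos_right hpos n.cast_nonneg) hρ.le

theorem exists_strictMono_dual_eigenvector (hp : p ≠ ⊤) {K : Lp ℝ p π →L[ℝ] Lp ℝ p π}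
    (hK : IsPositivityImproving K) (hρ : 0 < specRad K) {n : ℕ}
    (hn : IsCompactOperator ⇑(K ^ n)) :
    ∃ ψ : StrongDual ℝ (Lp ℝ p π), StrictMono ψ ∧ ∀ f, ψ (K f) = specRad K * ψ f := by
  obtain ⟨ψ, hψ, hψ0, hψK⟩ := exists_monotone_dual_eigenvector hK.monotone hρ hn
  exact ⟨ψ, strictMono_of_dual_eigenvector hp hK hψ hψ0 hρ hψK, hψK⟩

end PositiveCone

section Aggregator

/-- The scalar map `t ↦ (z + β t^{1/θ})^θ`, through which the recursive utility operator acts: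
`(A g)(x) = aggregator β θ (ξ x) ((K g)(x))`. -/
noncomputable def aggregator (β θ z t : ℝ) : ℝ := (z + β * t ^ (1 / θ)) ^ θ

variable {β θ z t : ℝ}

lemma mul_rpow_one_div_rpow (hθ : θ ≠ 0) (hβ : 0 ≤ β) (ht : 0 ≤ t) :
    (β * t ^ (1 / θ)) ^ θ = β ^ θ * t := by
  rw [Real.mul_rpow hβ (by positivity), ← Real.rpow_mul ht, one_div_mul_cancel hθ, Real.rpow_one]

lemma mul_rpow_one_div_lt_one_iff_of_pos (hθ : 0 < θ) (hβ : 0 < β) (ht : 0 < t) :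
    β * t ^ (1 / θ) < 1 ↔ β ^ θ * t < 1 := by
  rw [← mul_rpow_one_div_rpow hθ.ne' hβ.le ht.le, Real.rpow_lt_one_iff_of_pos (by positivity)]
  simp [hθ, hθ.not_gt]

lemma mul_rpow_one_div_lt_one_iff_of_neg (hθ : θ < 0) (hβ : 0 < β) (ht : 0 < t) :
    β * t ^ (1 / θ) < 1 ↔ 1 < β ^ θ * t := by
  rw [← mul_rpow_one_div_rpow hθ.ne hβ.le ht.le, Real.one_lt_rpow_iff_of_pos (by positivity)]
  simp [hθ, hθ.not_gt]

lemma aggregator_pos (hβ : 0 < β) (hz : 0 < z) (ht : 0 < t) : 0 < aggregator β θ z t := by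
  unfold aggregator
  positivity

lemma monotoneOn_aggregator (hβ : 0 < β) (hz : 0 < z) :
    MonotoneOn (aggregator β θ z) (Set.Ioi 0) := by
  intro s (hs : 0 < s) t (ht : 0 < t) hst
  unfold aggregator
  obtain hθ | hθ := le_total 0 θ
  · gcongr
  · have hpow : t ^ (1 / θ) ≤ s ^ (1 / θ) :=
      Real.rpow_le_rpow_of_nonpos hs hst (one_div_nonpos.2 hθ)
    exact Real.rpow_le_rpow_of_nonpos (by positivity) (by gcongr) hθ

lemma continuousAt_aggregator (hβ : 0 < β) (hz : 0 < z) (ht : 0 < t) :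
    ContinuousAt (aggregator β θ z) t := by
  have hbase : z + β * t ^ (1 / θ) ≠ 0 := by positivity
  exact (continuousAt_const.add (continuousAt_const.mul
    (Real.continuousAt_rpow_const _ _ (.inl ht.ne')))).rpow_const (.inl hbase)

lemma mul_lt_aggregator_of_pos (hθ : 0 < θ) (hβ : 0 < β) (hz : 0 < z) (ht : 0 < t) :
    β ^ θ * t < aggregator β θ z t := by
  rw [← mul_rpow_one_div_rpow hθ.ne' hβ.le ht.le]
  exact Real.rpow_lt_rpow (by positivity) (lt_add_of_pos_left _ hz) hθ

lemma aggregator_lt_mul_of_neg (hθ : θ < 0) (hβ : 0 < β) (hz : 0 < z) (ht : 0 < t) :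
    aggregator β θ z t < β ^ θ * t := by
  rw [← mul_rpow_one_div_rpow hθ.ne hβ.le ht.le]
  exact Real.rpow_lt_rpow_of_neg (by positivity) (lt_add_of_pos_left _ hz) hθ

lemma one_sub_aggregator_div_mul_mem_Icc (hθ : θ < 0) (hβ : 0 < β) (hz : 0 < z) (ht : 0 < t) :
    1 - aggregator β θ z t / (β ^ θ * t) ∈ Set.Icc 0 1 := by
  have hpos : 0 < β ^ θ * t := by positivity
  exact ⟨sub_nonneg.2 ((div_le_one hpos).2 (aggregator_lt_mul_of_neg hθ hβ hz ht).le),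
    sub_le_self _ (div_nonneg (aggregator_pos hβ hz ht).le hpos.le)⟩

lemma rpow_le_aggregator_of_pos {z₀ : ℝ} (hθ : 0 < θ) (hβ : 0 < β) (hz₀ : 0 < z₀) (hz : z₀ ≤ z)
    (ht : 0 < t) : z₀ ^ θ ≤ aggregator β θ z t :=
  Real.rpow_le_rpow hz₀.le (le_add_of_le_of_nonneg hz (by positivity)) hθ.le

lemma aggregator_le_rpow_of_neg {z₀ : ℝ} (hθ : θ < 0) (hβ : 0 < β) (hz₀ : 0 < z₀) (hz : z₀ ≤ z)
    (ht : 0 < t) : aggregator β θ z t ≤ z₀ ^ θ :=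
  Real.rpow_le_rpow_of_nonpos hz₀ (le_add_of_le_of_nonneg hz (by positivity)) hθ.le

lemma exists_aggregator_le_mul_add (hθ : 0 < θ) (hβ : 0 < β) {z₁ c : ℝ} (hz₁ : 0 < z₁)
    (hc : β ^ θ < c) : ∃ C, 0 < C ∧
      ∀ z t, 0 < z → z ≤ z₁ → 0 < t → aggregator β θ z t ≤ c * t + C := by
  have hc0 : 0 < c := (Real.rpow_pos_of_pos hβ θ).trans hc
  obtain ⟨b, hβb, rfl⟩ : ∃ b, β < b ∧ b ^ θ = c := by
    refine ⟨c ^ θ⁻¹, ?_, Real.rpow_inv_rpow hc0.le hθ.ne'⟩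
    rwa [Real.lt_rpow_inv_iff_of_pos hβ.le hc0.le hθ]
  have hgap : 0 < b - β := sub_pos.2 hβb
  have hb : 0 < b := hβ.trans hβb
  refine ⟨(z₁ + β * (z₁ / (b - β))) ^ θ, by positivity, fun z t hz hzz₁ ht => ?_⟩
  set s := t ^ (1 / θ)
  obtain hlarge | hsmall := le_total z₁ ((b - β) * s)
  · refine le_add_of_le_of_nonneg ?_ (by positivity)
    rw [← mul_rpow_one_div_rpow hθ.ne' hb.le ht.le]
    exact Real.rpow_le_rpow (by positivity) (by linarith) hθ.le
  · refine le_add_of_nonneg_of_le (by positivity) ?_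
    have hs_le : s ≤ z₁ / (b - β) := by rwa [le_div_iff₀' hgap]
    exact Real.rpow_le_rpow (by positivity) (by gcongr) hθ.le

lemma tendsto_one_sub_aggregator_div_mul_of_neg (hθ : θ < 0) (hβ : 0 < β) :
    Tendsto (fun t => 1 - aggregator β θ z t / (β ^ θ * t)) (𝓝[>] 0) (𝓝 0) := by
  have htop : Tendsto (fun t : ℝ => β * t ^ (1 / θ)) (𝓝[>] 0) atTop :=
    (tendsto_rpow_neg_nhdsGT_zero (one_div_neg.2 hθ)).const_mul_atTop hβ
  have hlim : Tendsto (fun t : ℝ => 1 - (z / (β * t ^ (1 / θ)) + 1) ^ θ) (𝓝[>] 0) (𝓝 0) := by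
    have h := (htop.const_div_atTop z).add_const 1
    rw [zero_add] at h
    simpa using (h.rpow_const (p := θ) (.inl one_ne_zero)).const_sub 1
  refine hlim.congr' ?_
  filter_upwards [self_mem_nhdsWithin, htop.eventually_ge_atTop |z|] with t (ht : 0 < t) hzt
  have hbase : 0 ≤ z + β * t ^ (1 / θ) := by linarith [neg_abs_le z]
  have hpos : 0 < β * t ^ (1 / θ) := by positivity
  rw [← mul_rpow_one_div_rpow hθ.ne hβ.le ht.le, aggregator, ← Real.div_rpow hbase hpos.le,
    add_div, div_self hpos.ne']

end Aggregator

section MonotoneIteration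

variable {X : Type*} [MeasurableSpace X] {π : Measure X} {p : ℝ≥0∞} [Fact (1 ≤ p)]

lemma exists_fixedPoint_ge_of_monotoneOn (hp : p ≠ ⊤) {B : Lp ℝ p π → Lp ℝ p π} {a b : Lp ℝ p π}
    (hB : MonotoneOn B (strictlyPositiveCone p π))
    (hclosed : ∀ ⦃f : ℕ → Lp ℝ p π⦄ ⦃g h⦄, (∀ n, f n ∈ strictlyPositiveCone p π) →
      g ∈ strictlyPositiveCone p π → Tendsto f atTop (𝓝 g) →
      Tendsto (fun n => B (f n)) atTop (𝓝 h) → B g = h)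
    (ha : a ∈ strictlyPositiveCone p π) (hb : b ∈ strictlyPositiveCone p π)
    (haB : ∀ f ∈ strictlyPositiveCone p π, a ≤ B f) (hbB : B b ≤ b) :
    ∃ g, a ≤ g ∧ B g = g ∧ ∀ f ∈ strictlyPositiveCone p π, f ≤ b → f ≤ B f → f ≤ g := by
  have hmaps : Set.MapsTo B (strictlyPositiveCone p π) (strictlyPositiveCone p π) :=
    fun f hf => isUpperSet_strictlyPositiveCone (haB f hf) ha
  have hmem (n : ℕ) : B^[n] b ∈ strictlyPositiveCone p π := hmaps.iterate n hb
  have hanti : Antitone fun n => B^[n] b := by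
    refine antitone_nat_of_succ_le fun n => ?_
    induction n with
    | zero => exact hbB
    | succ n ih =>
      simp only [Function.iterate_succ_apply'] at ih ⊢
      exact hB (hmaps (hmem n)) (hmem n) ih
  have hlower (n : ℕ) : a ≤ B^[n] b := by
    refine (haB _ (hmem n)).trans ?_
    simpa only [Function.iterate_succ_apply'] using hanti n.le_succ
  obtain ⟨g, hg⟩ := exists_tendsto_Lp_of_antitone hp hanti
    fun n => nonneg_of_mem_strictlyPositiveCone (hmem n)
  have hag : a ≤ g := ge_of_tendsto' hg hlower
  have hshift : Tendsto (fun n => B (B^[n] b)) atTop (𝓝 g) := by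
    simpa only [Function.comp_def, Function.iterate_succ_apply'] using
      hg.comp (tendsto_add_atTop_nat 1)
  refine ⟨g, hag, hclosed hmem (isUpperSet_strictlyPositiveCone hag ha) hg hshift,
    fun f hf hfb hfB => ge_of_tendsto' hg fun n => ?_⟩
  induction n with
  | zero => exact hfb
  | succ n ih =>
    rw [Function.iterate_succ_apply']
    exact hfB.trans (hB hf (hmem n) ih)

end MonotoneIteration

section UtilityOperator

variable {X : Type*} [MeasurableSpace X] {π : Measure X} {p : ℝ≥0∞} [Fact (1 ≤ p)]
  {K : Lp ℝ p π →L[ℝ] Lp ℝ p π} {A : Lp ℝ p π → Lp ℝ p π} {β θ ξ₀ ξ₁ : ℝ} {ξ : X → ℝ}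

/-- `A` is the recursive utility operator `g ↦ (ξ + β (K g)^{1/θ})^θ` on `L_p(X,π)_+`; its values
outside this cone are left unspecified. -/
def IsUtilityOperator (K : Lp ℝ p π →L[ℝ] Lp ℝ p π) (ξ : X → ℝ) (β θ : ℝ)
    (A : Lp ℝ p π → Lp ℝ p π) : Prop :=
  ∀ g ∈ strictlyPositiveCone p π, A g =ᵐ[π] fun x => aggregator β θ (ξ x) (K g x)

namespace IsUtilityOperator

/- Closedness of the graph of `A`, stated so that the limit `g` need not itself be known to lie in
the cone. -/
lemma ae_eq_aggregator_of_tendsto (hA : IsUtilityOperator K ξ β θ A) (hβ : 0 < β)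
    (hξ : ∀ᵐ x ∂π, 0 < ξ x) {f : ℕ → Lp ℝ p π} {g h : Lp ℝ p π}
    (hf : ∀ n, f n ∈ strictlyPositiveCone p π) (hKg : K g ∈ strictlyPositiveCone p π)
    (hfg : Tendsto f atTop (𝓝 g)) (hAf : Tendsto (fun n => A (f n)) atTop (𝓝 h)) :
    h =ᵐ[π] fun x => aggregator β θ (ξ x) (K g x) := by
  obtain ⟨ms, hms, hKlim⟩ := exists_subseq_tendsto_ae ((K.continuous.tendsto g).comp hfg)
  obtain ⟨ns, hns, hAlim⟩ := exists_subseq_tendsto_ae (hAf.comp hms.tendsto_atTop)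
  filter_upwards [hKlim, hAlim, ae_all_iff.2 fun n => hA (f n) (hf n), hξ, hKg]
    with x hKx hAx hAf hξx hKgx
  refine tendsto_nhds_unique hAx ?_
  simp only [Function.comp_apply, hAf]
  exact (continuousAt_aggregator hβ hξx hKgx).tendsto.comp (hKx.comp hns.tendsto_atTop)

variable [NeZero π]

lemma mapsTo (hA : IsUtilityOperator K ξ β θ A) (hK : IsPositivityImproving K) (hβ : 0 < β)
    (hξ : ∀ᵐ x ∂π, 0 < ξ x) :
    Set.MapsTo A (strictlyPositiveCone p π) (strictlyPositiveCone p π) := by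
  intro g hg
  filter_upwards [hA g hg, hK.mapsTo hg, hξ] with x hAx hKx hξx
  exact hAx ▸ aggregator_pos hβ hξx hKx

lemma monotoneOn (hA : IsUtilityOperator K ξ β θ A) (hK : IsPositivityImproving K) (hβ : 0 < β)
    (hξ : ∀ᵐ x ∂π, 0 < ξ x) : MonotoneOn A (strictlyPositiveCone p π) := by
  intro f hf g hg hfg
  rw [← Lp.coeFn_le]
  filter_upwards [hA f hf, hA g hg, hK.mapsTo hf, hK.mapsTo hg,
    (Lp.coeFn_le _ _).2 (hK.monotone hfg), hξ] with x hfx hgx hKf hKg hle hξx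
  rw [hfx, hgx]
  exact monotoneOn_aggregator hβ hξx hKf hKg hle

lemma apply_eq_of_tendsto (hA : IsUtilityOperator K ξ β θ A) (hK : IsPositivityImproving K)
    (hβ : 0 < β) (hξ : ∀ᵐ x ∂π, 0 < ξ x) ⦃f : ℕ → Lp ℝ p π⦄ ⦃g h : Lp ℝ p π⦄
    (hf : ∀ n, f n ∈ strictlyPositiveCone p π) (hg : g ∈ strictlyPositiveCone p π)
    (hfg : Tendsto f atTop (𝓝 g)) (hAf : Tendsto (fun n => A (f n)) atTop (𝓝 h)) : A g = h :=
  Lp.ext ((hA g hg).trans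
    (hA.ae_eq_aggregator_of_tendsto hβ hξ hf (hK.mapsTo hg) hfg hAf).symm)

lemma fixedPoint_of_tendsto_iterate (hA : IsUtilityOperator K ξ β θ A)
    (hK : IsPositivityImproving K) (hβ : 0 < β) (hξ : ∀ᵐ x ∂π, 0 < ξ x) {f g : Lp ℝ p π}
    (hf : f ∈ strictlyPositiveCone p π) (hg : g ∈ strictlyPositiveCone p π)
    (h : Tendsto (fun n => A^[n] f) atTop (𝓝 g)) : A g = g := by
  refine hA.apply_eq_of_tendsto hK hβ hξ (fun n => (hA.mapsTo hK hβ hξ).iterate n hf) hg h ?_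
  simpa only [Function.comp_def, Function.iterate_succ_apply'] using
    h.comp (tendsto_add_atTop_nat 1)

lemma fixedPoint_of_tendsto (hA : IsUtilityOperator K ξ β θ A) (hK : IsPositivityImproving K)
    (hβ : 0 < β) (hξ : ∀ᵐ x ∂π, 0 < ξ x) {f : ℕ → Lp ℝ p π} {g : Lp ℝ p π}
    (hf : ∀ n, f n ∈ strictlyPositiveCone p π) (hg : 0 < g) (hfg : Tendsto f atTop (𝓝 g))
    (hAf : Tendsto (fun n => A (f n)) atTop (𝓝 g)) : g ∈ strictlyPositiveCone p π ∧ A g = g := by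
  have hg' : g ∈ strictlyPositiveCone p π := by
    filter_upwards [hA.ae_eq_aggregator_of_tendsto hβ hξ hf (hK hg) hfg hAf, hK hg, hξ]
      with x hgx hKx hξx
    exact hgx ▸ aggregator_pos hβ hξx hKx
  exact ⟨hg', hA.apply_eq_of_tendsto hK hβ hξ hf hg' hfg hAf⟩

lemma smul_lt_apply_of_pos (hA : IsUtilityOperator K ξ β θ A) (hK : IsPositivityImproving K)
    (hθ : 0 < θ) (hβ : 0 < β) (hξ : ∀ᵐ x ∂π, 0 < ξ x) {g : Lp ℝ p π}
    (hg : g ∈ strictlyPositiveCone p π) : β ^ θ • K g < A g := by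
  refine lt_of_ae_lt ?_
  filter_upwards [hA g hg, hK.mapsTo hg, hξ, Lp.coeFn_smul (β ^ θ) (K g)] with x hAx hKx hξx hsmul
  rw [hAx, hsmul]
  exact mul_lt_aggregator_of_pos hθ hβ hξx hKx

lemma apply_lt_smul_of_neg (hA : IsUtilityOperator K ξ β θ A) (hK : IsPositivityImproving K)
    (hθ : θ < 0) (hβ : 0 < β) (hξ : ∀ᵐ x ∂π, 0 < ξ x) {g : Lp ℝ p π}
    (hg : g ∈ strictlyPositiveCone p π) : A g < β ^ θ • K g := by
  refine lt_of_ae_lt ?_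
  filter_upwards [hA g hg, hK.mapsTo hg, hξ, Lp.coeFn_smul (β ^ θ) (K g)] with x hAx hKx hξx hsmul
  rw [hAx, hsmul]
  exact aggregator_lt_mul_of_neg hθ hβ hξx hKx

/- Pairing `g = A g` with a strictly positive dual eigenvector compares `ψ g` with
`β ^ θ * specRad K * ψ g`. -/
lemma lt_one_of_fixedPoint (hA : IsUtilityOperator K ξ β θ A) (hp : p ≠ ⊤)
    (hK : IsPositivityImproving K) (hρ : 0 < specRad K) {n : ℕ}
    (hn : IsCompactOperator ⇑(K ^ n)) (hβ : 0 < β) (hθ : θ ≠ 0) (hξ : ∀ᵐ x ∂π, 0 < ξ x)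
    {g : Lp ℝ p π} (hg : g ∈ strictlyPositiveCone p π) (hfix : A g = g) :
    β * specRad K ^ (1 / θ) < 1 := by
  obtain ⟨ψ, hψ, hψK⟩ := exists_strictMono_dual_eigenvector hp hK hρ hn
  have hψg : 0 < ψ g := map_zero ψ ▸ hψ (pos_of_mem_strictlyPositiveCone hg)
  have hψKg : ψ (β ^ θ • K g) = β ^ θ * specRad K * ψ g := by
    rw [map_smul, hψK, smul_eq_mul, mul_assoc]
  obtain hneg | hpos := hθ.lt_or_gt
  · rw [mul_rpow_one_div_lt_one_iff_of_neg hneg hβ hρ]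
    have hlt := hψ (hA.apply_lt_smul_of_neg hK hneg hβ hξ hg)
    rw [hfix, hψKg] at hlt
    exact (lt_mul_iff_one_lt_left hψg).1 hlt
  · rw [mul_rpow_one_div_lt_one_iff_of_pos hpos hβ hρ]
    have hlt := hψ (hA.smul_lt_apply_of_pos hK hpos hβ hξ hg)
    rw [hfix, hψKg] at hlt
    exact (mul_lt_iff_lt_one_left hψg).1 hlt

end IsUtilityOperator

end UtilityOperator

section AsymptoticSolutions

lemma tendsto_zero_of_dual_eigenvector {E : Type*} [NormedAddCommGroup E] [NormedSpace ℝ E]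
    [PartialOrder E] [OrderClosedTopology E]
    {T : E →L[ℝ] E} {ψ : StrongDual ℝ E} (hψ : StrictMono ψ) {σ : ℝ} (hσ : 1 < σ)
    (hψT : ∀ x, ψ (T x) = σ * ψ x) {e v : E} (he : 0 < e) {h : ℕ → E} {b : ℕ → ℝ} {i : ℕ}
    (hh : ∀ n, 0 ≤ h n) (hb : ∀ n, 0 ≤ b n)
    (hr : Tendsto (fun n => T (h n) + b n • e - h n) atTop (𝓝 0))
    (hv : Tendsto (fun n => (T ^ i) (h n)) atTop (𝓝 v)) : Tendsto h atTop (𝓝 0) := by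
  have hψe : 0 < ψ e := map_zero ψ ▸ hψ he
  have hψh (n : ℕ) : 0 ≤ (σ - 1) * ψ (h n) :=
    mul_nonneg (sub_nonneg.2 hσ.le) (map_zero ψ ▸ hψ.monotone (hh n))
  have hψb (n : ℕ) : 0 ≤ b n * ψ e := mul_nonneg (hb n) hψe.le
  have hψr : Tendsto (fun n => (σ - 1) * ψ (h n) + b n * ψ e) atTop (𝓝 0) := by
    refine (map_zero ψ ▸ (ψ.continuous.tendsto 0).comp hr).congr fun n => ?_
    rw [Function.comp_apply, map_sub, map_add, map_smul, hψT, smul_eq_mul]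
    ring
  have hψh0 : Tendsto (fun n => ψ (h n)) atTop (𝓝 0) := by
    have := squeeze_zero hψh (fun n => le_add_of_nonneg_right (hψb n)) hψr
    simpa [(sub_pos.2 hσ).ne'] using this.const_mul (σ - 1)⁻¹
  have hb0 : Tendsto b atTop (𝓝 0) := by
    have := squeeze_zero hψb (fun n => le_add_of_nonneg_left (hψh n)) hψr
    simpa [hψe.ne'] using this.mul_const (ψ e)⁻¹
  have hhv : Tendsto h atTop (𝓝 v) := by
    have hdiff : Tendsto (fun n => b n • e - (T (h n) + b n • e - h n)) atTop (𝓝 0) := by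
      simpa using (hb0.smul_const e).sub hr
    have hG := hv.add (((∑ j ∈ Finset.range i, T ^ j).continuous.tendsto 0).comp hdiff)
    rw [map_zero, add_zero] at hG
    refine hG.congr fun n => ?_
    have hgeom := DFunLike.congr_fun (geom_sum_mul_neg T i) (h n)
    rw [mul_apply_eq_comp, sub_apply, sub_apply, one_apply_eq_self] at hgeom
    rw [Function.comp_apply, show b n • e - (T (h n) + b n • e - h n) = h n - T (h n) by abel,
      hgeom, add_sub_cancel]
  have hψv : ψ v = 0 := tendsto_nhds_unique ((ψ.continuous.tendsto v).comp hhv) hψh0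
  obtain rfl : 0 = v := (ge_of_tendsto' hhv hh).eq_of_not_lt fun hv0 =>
    ((map_zero ψ).symm.trans_lt (hψ hv0)).ne' hψv
  exact hhv

lemma inv_norm_mul_smul_le {E : Type*} [NormedAddCommGroup E] [NormedSpace ℝ E] [Lattice E]
    [HasSolidNorm E] [IsOrderedAddMonoid E] [PosSMulMono ℝ E] {e x : E} (he : 0 ≤ e) {ε : ℝ}
    (hε : 0 ≤ ε) (hx : ε • e ≤ x) : (‖x‖⁻¹ * ε) • e ≤ ‖e‖⁻¹ • e := by
  obtain rfl | he0 := eq_or_ne e 0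
  · simp
  have hnorm : ε * ‖e‖ ≤ ‖x‖ := by
    rw [← Real.norm_of_nonneg hε, ← norm_smul]
    exact norm_le_norm_of_nonneg_of_le (smul_nonneg hε he) hx
  refine smul_le_smul_of_nonneg_right ?_ he
  refine inv_mul_le_of_le_mul₀ (norm_nonneg x) (inv_nonneg.2 (norm_nonneg e)) ?_
  rwa [← div_eq_mul_inv, le_div_iff₀ (norm_pos_iff.2 he0)]

lemma sub_abs_sub_le_mul_abs {r a y y' : ℝ} (ha : a ∈ Set.Icc 0 1) (hr : r ≤ a * y) :
    r - |y - y'| ≤ a * |y'| := by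
  rw [sub_le_iff_le_add]
  calc r ≤ a * y' + a * (y - y') := hr.trans_eq (by ring)
    _ ≤ a * |y'| + a * |y - y'| := by
      gcongr
      exacts [ha.1, le_abs_self _, ha.1, le_abs_self _]
    _ ≤ a * |y'| + |y - y'| := by
      gcongr
      exact mul_le_of_le_one_left (abs_nonneg _) ha.2

variable {X : Type*} [MeasurableSpace X] {π : Measure X} {p : ℝ≥0∞} [Fact (1 ≤ p)]

lemma tendsto_zero_of_le_mul (hp : p ≠ ⊤) {r y : ℕ → Lp ℝ p π} {y' : Lp ℝ p π} {α : ℕ → X → ℝ}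
    (hy : Tendsto y atTop (𝓝 y')) (hr0 : ∀ n, 0 ≤ r n)
    (hr : ∀ n, ∀ᵐ x ∂π, r n x ≤ α n x * y n x) (hα : ∀ n, ∀ᵐ x ∂π, α n x ∈ Set.Icc 0 1)
    (hα0 : ∀ᵐ x ∂π, Tendsto (fun n => α n x) atTop (𝓝 0)) : Tendsto r atTop (𝓝 0) := by
  set m : ℕ → Lp ℝ p π := fun n => (r n - |y n - y'|)⁺ with hm_def
  have hm : ∀ᵐ x ∂π, ∀ n, |m n x| ≤ α n x * |y' x| := by
    refine ae_all_iff.2 fun n => ?_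
    filter_upwards [hr n, hα n, Lp.coeFn_sup (r n - |y n - y'|) 0, Lp.coeFn_zero ℝ p π,
      Lp.coeFn_sub (r n) |y n - y'|, Lp.coeFn_abs (y n - y'), Lp.coeFn_sub (y n) y']
      with x hrx hαx hsup hzero hsub habs hsub'
    have hmx : m n x = max (r n x - |y n x - y' x|) 0 := by
      simp only [hm_def, posPart_def]
      rw [hsup, Pi.sup_apply, hsub, hzero, Pi.sub_apply, habs, hsub']
      rfl
    rw [hmx, abs_of_nonneg (le_max_right _ _)]
    exact max_le (sub_abs_sub_le_mul_abs hαx hrx) (mul_nonneg hαx.1 (abs_nonneg _))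
  have hm0 : Tendsto m atTop (𝓝 0) := by
    refine tendsto_Lp_of_abs_le (F := |y'|) hp (fun n => ?_) ?_
    · rw [← Lp.coeFn_le]
      filter_upwards [hm, hα n, Lp.coeFn_abs (m n), Lp.coeFn_abs y'] with x hmx hαx habs habs'
      rw [habs, habs']
      exact (hmx n).trans (mul_le_of_le_one_left (abs_nonneg _) hαx.2)
    · filter_upwards [hm, hα0, Lp.coeFn_zero ℝ p π] with x hmx hαx hzero
      rw [hzero]
      refine squeeze_zero_norm hmx ?_
      simpa only [zero_mul] using hαx.mul_const |y' x|
  have hle (n : ℕ) : ‖r n‖ ≤ ‖m n‖ + ‖y n - y'‖ :=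
    calc ‖r n‖ ≤ ‖m n + |y n - y'|‖ :=
          norm_le_norm_of_nonneg_of_le (hr0 n) (sub_le_iff_le_add.1 (le_posPart _))
      _ ≤ ‖m n‖ + ‖y n - y'‖ := (norm_add_le _ _).trans_eq (by rw [norm_abs_eq_norm])
  refine squeeze_zero_norm hle ?_
  simpa only [norm_zero, add_zero] using
    hm0.norm.add (tendsto_iff_norm_sub_tendsto_zero.1 hy)

lemma exists_subseq_tendsto_zero_of_one_lt_mul_specRad (hp : p ≠ ⊤)
    {K : Lp ℝ p π →L[ℝ] Lp ℝ p π} (hK : IsPositivityImproving K) (hρ : 0 < specRad K) {i : ℕ}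
    (hi : IsCompactOperator ⇑(K ^ i)) {c : ℝ} (hc : 0 < c) (hcρ : 1 < c * specRad K)
    {e u : Lp ℝ p π} (he : 0 < e) {h : ℕ → Lp ℝ p π} {b : ℕ → ℝ} {α : ℕ → X → ℝ}
    (hh : ∀ n, 0 ≤ h n) (hh1 : ∀ n, ‖h n‖ ≤ 1) (hb : ∀ n, 0 ≤ b n) (hbu : ∀ n, b n • e ≤ u)
    (hr0 : ∀ n, h n ≤ (c • K) (h n) + b n • e)
    (hr : ∀ n, ∀ᵐ x ∂π, ((c • K) (h n) + b n • e - h n) x ≤ α n x * (c • K) (h n) x)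
    (hα : ∀ n, ∀ᵐ x ∂π, α n x ∈ Set.Icc 0 1)
    (hα0 : ∀ᵐ x ∂π, Tendsto (fun n => α n x) atTop (𝓝 0)) :
    ∃ ns : ℕ → ℕ, StrictMono ns ∧ Tendsto (h ∘ ns) atTop (𝓝 0) := by
  obtain ⟨ψ, hψ, hψK⟩ := exists_strictMono_dual_eigenvector hp hK hρ hi
  set T : Lp ℝ p π →L[ℝ] Lp ℝ p π := c • K
  have hT : Monotone T := fun f g hfg => smul_le_smul_of_nonneg_left (hK.monotone hfg) hc.le
  have hTi : IsCompactOperator ⇑(T ^ i) := by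
    rw [smul_pow]
    exact hi.smul (c ^ i)
  have hψT (f : Lp ℝ p π) : ψ (T f) = c * specRad K * ψ f := by
    rw [smul_apply, map_smul, hψK, smul_eq_mul, mul_assoc]
  have hball (n : ℕ) : (T ^ i) (h n) ∈ (T ^ i) '' Metric.closedBall 0 1 :=
    Set.mem_image_of_mem _ (mem_closedBall_zero_iff.2 (hh1 n))
  obtain ⟨C, hC, hCsub⟩ := IsCompactOperator.image_closedBall_subset_compact
    (f := ((T ^ i : Lp ℝ p π →L[ℝ] Lp ℝ p π) : Lp ℝ p π →ₗ[ℝ] Lp ℝ p π)) hTi 1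
  obtain ⟨v, -, ns, hns, hv⟩ := hC.tendsto_subseq fun n => hCsub (hball n)
  have : OrderClosedTopology (Lp ℝ p π) := HasSolidNorm.orderClosedTopology
  refine ⟨ns, hns, tendsto_zero_of_dual_eigenvector hψ hcρ hψT he (fun n => hh (ns n))
    (fun n => hb (ns n)) ?_ hv⟩
  have hTh (n : ℕ) : T (h n) ≤ T ((T ^ i) (h n) + (∑ j ∈ Finset.range i, T ^ j) u) :=
    hT (le_pow_apply_add_geom_sum_apply hT ((hr0 n).trans (add_le_add_right (hbu n) _)) i)
  refine tendsto_zero_of_le_mul (α := fun n => α (ns n)) hp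
    ((T.continuous.tendsto _).comp (hv.add_const ((∑ j ∈ Finset.range i, T ^ j) u)))
    (fun n => sub_nonneg.2 (hr0 (ns n))) (fun n => ?_) (fun n => hα (ns n))
    (hα0.mono fun x hx => hx.comp hns.tendsto_atTop)
  filter_upwards [hr (ns n), hα (ns n), (Lp.coeFn_le _ _).2 (hTh (ns n))] with x hrx hαx hle
  exact hrx.trans (mul_le_mul_of_nonneg_left hle hαx.1)

end AsymptoticSolutions

section Existence

variable {X : Type*} [MeasurableSpace X] {π : Measure X} {p : ℝ≥0∞} [Fact (1 ≤ p)]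
  {K : Lp ℝ p π →L[ℝ] Lp ℝ p π} {A : Lp ℝ p π → Lp ℝ p π} {β θ ξ₀ ξ₁ : ℝ} {ξ : X → ℝ}

namespace IsUtilityOperator

section Bounds

variable [NeZero π] [IsFiniteMeasure π] {g : Lp ℝ p π}

lemma const_le_apply_of_pos (hA : IsUtilityOperator K ξ β θ A) (hK : IsPositivityImproving K)
    (hθ : 0 < θ) (hβ : 0 < β) (hξ₀ : 0 < ξ₀) (hξ : ∀ᵐ x ∂π, ξ₀ ≤ ξ x)
    (hg : g ∈ strictlyPositiveCone p π) : Lp.const p π (ξ₀ ^ θ) ≤ A g := by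
  rw [← Lp.coeFn_le]
  filter_upwards [hA g hg, hK.mapsTo hg, hξ, Lp.coeFn_const (p := p) (μ := π) (ξ₀ ^ θ)]
    with x hAx hKx hξx hconst
  rw [hAx, hconst]
  exact rpow_le_aggregator_of_pos hθ hβ hξ₀ hξx hKx

lemma apply_le_const_of_neg (hA : IsUtilityOperator K ξ β θ A) (hK : IsPositivityImproving K)
    (hθ : θ < 0) (hβ : 0 < β) (hξ₀ : 0 < ξ₀) (hξ : ∀ᵐ x ∂π, ξ₀ ≤ ξ x)
    (hg : g ∈ strictlyPositiveCone p π) : A g ≤ Lp.const p π (ξ₀ ^ θ) := by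
  rw [← Lp.coeFn_le]
  filter_upwards [hA g hg, hK.mapsTo hg, hξ, Lp.coeFn_const (p := p) (μ := π) (ξ₀ ^ θ)]
    with x hAx hKx hξx hconst
  rw [hAx, hconst]
  exact aggregator_le_rpow_of_neg hθ hβ hξ₀ hξx hKx

lemma exists_apply_le_smul_add_const (hA : IsUtilityOperator K ξ β θ A)
    (hK : IsPositivityImproving K) (hθ : 0 < θ) (hβ : 0 < β) (hξ₁ : 0 < ξ₁)
    (hξ : ∀ᵐ x ∂π, ξ x ∈ Set.Ioc 0 ξ₁) {c : ℝ} (hc : β ^ θ < c) :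
    ∃ C, 0 < C ∧ ∀ g ∈ strictlyPositiveCone p π, A g ≤ c • K g + Lp.const p π C := by
  obtain ⟨C, hC, h⟩ := exists_aggregator_le_mul_add hθ hβ hξ₁ hc
  refine ⟨C, hC, fun g hg => ?_⟩
  rw [← Lp.coeFn_le]
  filter_upwards [hA g hg, hK.mapsTo hg, hξ, Lp.coeFn_const (p := p) (μ := π) C,
    Lp.coeFn_smul c (K g), Lp.coeFn_add (c • K g) (Lp.const p π C)]
    with x hAx hKx hξx hconst hsmul hadd
  rw [hAx, hadd, Pi.add_apply, hsmul, Pi.smul_apply, hconst]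
  exact h _ _ hξx.1 hξx.2 hKx

end Bounds

/- For `θ > 0` the operator `A` is dominated by the affine map `g ↦ c K g + C` for any
`c > β ^ θ`; choosing `c < (specRad K)⁻¹`, the fixed point of this map is a supersolution. -/
lemma exists_fixedPoint_of_pos [NeZero π] [IsFiniteMeasure π] (hA : IsUtilityOperator K ξ β θ A)
    (hp : p ≠ ⊤) (hK : IsPositivityImproving K) (hθ : 0 < θ) (hβ : 0 < β)
    (hξ₀ : 0 < ξ₀) (hξ : ∀ᵐ x ∂π, ξ x ∈ Set.Icc ξ₀ ξ₁)
    (hΛ : β ^ θ * specRad K < 1) : ∃ g ∈ strictlyPositiveCone p π, A g = g := by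
  have hξpos : ∀ᵐ x ∂π, 0 < ξ x := hξ.mono fun x hx => hξ₀.trans_le hx.1
  have hξ₁ : 0 < ξ₁ := hξ.exists.elim fun x hx => hξ₀.trans_le (hx.1.trans hx.2)
  obtain ⟨r, hρr, hrβ⟩ : ∃ r, specRad K < r ∧ r < (β ^ θ)⁻¹ := by
    refine exists_between ?_
    rwa [← one_div, lt_div_iff₀ (Real.rpow_pos_of_pos hβ θ), mul_comm]
  have hr : 0 < r := (specRad_nonneg K).trans_lt hρr
  obtain ⟨R, hR, hRright, -⟩ := exists_monotone_resolvent hK.monotone hρr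
  obtain ⟨C, hC, hAC⟩ := hA.exists_apply_le_smul_add_const hK hθ hβ hξ₁
    (hξ.mono fun x hx => ⟨hξ₀.trans_le hx.1, hx.2⟩) ((lt_inv_comm₀ hr (by positivity)).1 hrβ)
  have hCcone := const_mem_strictlyPositiveCone (p := p) (π := π) hC
  set u : Lp ℝ p π := r • R (Lp.const p π C) with hu_def
  have hu0 : 0 ≤ u :=
    smul_nonneg hr.le (map_zero R ▸ hR (nonneg_of_mem_strictlyPositiveCone hCcone))
  have hu : r⁻¹ • K u + Lp.const p π C = u := by
    have h := DFunLike.congr_fun hRright (Lp.const p π C)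
    rw [mul_apply_eq_comp, sub_apply, smul_apply, one_apply_eq_self, one_apply_eq_self,
      sub_eq_iff_eq_add'] at h
    rw [hu_def, map_smul, inv_smul_smul₀ hr.ne', ← h]
  have hucone : u ∈ strictlyPositiveCone p π := by
    refine isUpperSet_strictlyPositiveCone ?_ hCcone
    exact (le_add_of_nonneg_left (smul_nonneg (inv_pos.2 hr).le
      (map_zero K ▸ hK.monotone hu0))).trans_eq hu
  have ha := const_mem_strictlyPositiveCone (p := p) (π := π) (Real.rpow_pos_of_pos hξ₀ θ)
  obtain ⟨g, hag, hg, -⟩ := exists_fixedPoint_ge_of_monotoneOn hp (hA.monotoneOn hK hβ hξpos)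
    (hA.apply_eq_of_tendsto hK hβ hξpos) ha hucone
    (fun f hf => hA.const_le_apply_of_pos hK hθ hβ hξ₀ (hξ.mono fun x hx => hx.1) hf)
    ((hAC u hucone).trans_eq hu)
  exact ⟨g, isUpperSet_strictlyPositiveCone hag ha, hg⟩

lemma exists_antitone_perturbed_fixedPoint [NeZero π] [IsFiniteMeasure π]
    (hA : IsUtilityOperator K ξ β θ A) (hp : p ≠ ⊤) (hK : IsPositivityImproving K) (hθ : θ < 0)
    (hβ : 0 < β) (hξ₀ : 0 < ξ₀) (hξ : ∀ᵐ x ∂π, ξ₀ ≤ ξ x) {e : Lp ℝ p π}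
    (he : e ∈ strictlyPositiveCone p π) {ε : ℕ → ℝ} (hε : Antitone ε) (hε0 : ∀ n, 0 < ε n) :
    ∃ g : ℕ → Lp ℝ p π, Antitone g ∧
      ∀ n, g n ∈ strictlyPositiveCone p π ∧ A (g n) + ε n • e = g n := by
  have hξpos : ∀ᵐ x ∂π, 0 < ξ x := hξ.mono fun x hx => hξ₀.trans_le hx
  have he0 := nonneg_of_mem_strictlyPositiveCone he
  have hεe {m n : ℕ} (hmn : m ≤ n) : ε n • e ≤ ε m • e :=
    smul_le_smul_of_nonneg_right (hε hmn) he0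
  have hcone (n : ℕ) : ε n • e ∈ strictlyPositiveCone p π := by
    filter_upwards [he, Lp.coeFn_smul (ε n) e] with x hx hsmul
    rw [hsmul]
    exact mul_pos (hε0 n) hx
  have hle {f : Lp ℝ p π} (hf : f ∈ strictlyPositiveCone p π) (n : ℕ) : ε n • e ≤ A f + ε n • e :=
    le_add_of_nonneg_left (nonneg_of_mem_strictlyPositiveCone (hA.mapsTo hK hβ hξpos hf))
  set b : Lp ℝ p π := Lp.const p π (ξ₀ ^ θ) + ε 0 • e
  have hAb {f : Lp ℝ p π} (hf : f ∈ strictlyPositiveCone p π) (n : ℕ) : A f + ε n • e ≤ b :=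
    add_le_add (hA.apply_le_const_of_neg hK hθ hβ hξ₀ hξ hf) (hεe n.zero_le)
  have hb : b ∈ strictlyPositiveCone p π :=
    isUpperSet_strictlyPositiveCone ((hle (hcone 0) 0).trans (hAb (hcone 0) 0)) (hcone 0)
  have hsol (n : ℕ) : ∃ g, ε n • e ≤ g ∧ A g + ε n • e = g ∧
      ∀ f ∈ strictlyPositiveCone p π, f ≤ b → f ≤ A f + ε n • e → f ≤ g := by
    refine exists_fixedPoint_ge_of_monotoneOn hp
      ((hA.monotoneOn hK hβ hξpos).add_const (ε n • e)) (fun f g h hf hg hfg hAf => ?_)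
      (hcone n) hb (fun f hf => hle hf n) (hAb hb n)
    rw [hA.apply_eq_of_tendsto hK hβ hξpos hf hg hfg (h := h - ε n • e)
      (by simpa using hAf.sub_const (ε n • e)), sub_add_cancel]
  choose g hge hg hmax using hsol
  have hgcone (n : ℕ) := isUpperSet_strictlyPositiveCone (hge n) (hcone n)
  refine ⟨g, fun m n hmn => hmax m _ (hgcone n) ?_ ?_, fun n => ⟨hgcone n, hg n⟩⟩
  · exact (hg n).ge.trans (hAb (hgcone n) n)
  · exact (hg n).ge.trans (add_le_add_right (hεe hmn) _)

lemma ae_smul_sub_apply_eq [NeZero π] (hA : IsUtilityOperator K ξ β θ A)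
    (hK : IsPositivityImproving K) (hβ : 0 < β) {g : Lp ℝ p π} (hg : g ∈ strictlyPositiveCone p π)
    (c : ℝ) : (c • ((β ^ θ • K) g - A g) : Lp ℝ p π) =ᵐ[π] fun x =>
      (1 - aggregator β θ (ξ x) (K g x) / (β ^ θ * K g x)) * (β ^ θ • K) (c • g) x := by
  rw [map_smul, smul_apply]
  filter_upwards [hA g hg, hK.mapsTo hg, Lp.coeFn_smul c (β ^ θ • K g - A g),
    Lp.coeFn_smul c (β ^ θ • K g), Lp.coeFn_sub (β ^ θ • K g) (A g), Lp.coeFn_smul (β ^ θ) (K g)]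
    with x hAx hKx hsmul_sub hsmul_smul hsub hsmul
  rw [hsmul_sub, Pi.smul_apply, hsub, Pi.sub_apply, hsmul_smul, Pi.smul_apply, hsmul, hAx,
    Pi.smul_apply, smul_eq_mul, smul_eq_mul, smul_eq_mul,
    mul_left_comm _ c, sub_mul, one_mul, div_mul_cancel₀ _ (by positivity)]

/- Otherwise `g n / ‖g n‖` would asymptotically solve the linear equation
`β ^ θ K h + b e = h`, `b ≥ 0`, which has no nonzero positive solution as
`1 < β ^ θ * specRad K`. -/
lemma not_tendsto_ae_zero_of_neg [NeZero π] (hA : IsUtilityOperator K ξ β θ A) (hp : p ≠ ⊤)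
    (hK : IsPositivityImproving K) (hρ : 0 < specRad K) {i : ℕ} (hi : IsCompactOperator ⇑(K ^ i))
    (hθ : θ < 0) (hβ : 0 < β) (hΛ : 1 < β ^ θ * specRad K) (hξ : ∀ᵐ x ∂π, 0 < ξ x)
    {e : Lp ℝ p π} (he : 0 < e) {ε : ℕ → ℝ} (hε : ∀ n, 0 ≤ ε n) {g : ℕ → Lp ℝ p π}
    (hg : ∀ n, g n ∈ strictlyPositiveCone p π) (hfix : ∀ n, A (g n) + ε n • e = g n) :
    ¬ ∀ᵐ x ∂π, Tendsto (fun n => K (g n) x) atTop (𝓝 0) := by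
  intro hlim
  have hβθ : 0 < β ^ θ := Real.rpow_pos_of_pos hβ θ
  have hnorm (n : ℕ) : ‖g n‖ ≠ 0 := norm_ne_zero_iff.2 (pos_of_mem_strictlyPositiveCone (hg n)).ne'
  set T : Lp ℝ p π →L[ℝ] Lp ℝ p π := β ^ θ • K
  set h : ℕ → Lp ℝ p π := fun n => ‖g n‖⁻¹ • g n
  have hh1 (n : ℕ) : ‖h n‖ = 1 := by rw [norm_smul, norm_inv, norm_norm, inv_mul_cancel₀ (hnorm n)]
  have hres (n : ℕ) : T (h n) + (‖g n‖⁻¹ * ε n) • e - h n = ‖g n‖⁻¹ • (T (g n) - A (g n)) := by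
    rw [map_smul, mul_smul, ← smul_add, ← smul_sub, eq_sub_of_add_eq (hfix n), sub_sub_eq_add_sub]
  have hbe (n : ℕ) : (‖g n‖⁻¹ * ε n) • e ≤ ‖e‖⁻¹ • e := by
    refine inv_norm_mul_smul_le he.le (hε n) (le_of_le_of_eq ?_ (hfix n))
    exact le_add_of_nonneg_left (nonneg_of_mem_strictlyPositiveCone (hA.mapsTo hK hβ hξ (hg n)))
  have hr0 (n : ℕ) : h n ≤ T (h n) + (‖g n‖⁻¹ * ε n) • e := by
    rw [← sub_nonneg, hres]
    exact smul_nonneg (by positivity) (sub_nonneg.2 (hA.apply_lt_smul_of_neg hK hθ hβ hξ (hg n)).le)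
  set α : ℕ → X → ℝ := fun n x => 1 - aggregator β θ (ξ x) (K (g n) x) / (β ^ θ * K (g n) x)
  have hα (n : ℕ) : ∀ᵐ x ∂π, α n x ∈ Set.Icc 0 1 := by
    filter_upwards [hK.mapsTo (hg n), hξ] with x hKx hξx
    exact one_sub_aggregator_div_mul_mem_Icc hθ hβ hξx hKx
  have hα0 : ∀ᵐ x ∂π, Tendsto (fun n => α n x) atTop (𝓝 0) := by
    filter_upwards [hlim, ae_all_iff.2 fun n => hK.mapsTo (hg n)] with x hx hKx
    exact (tendsto_one_sub_aggregator_div_mul_of_neg hθ hβ).comp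
      (tendsto_nhdsWithin_iff.2 ⟨hx, .of_forall hKx⟩)
  obtain ⟨ns, -, hns⟩ := exists_subseq_tendsto_zero_of_one_lt_mul_specRad hp hK hρ hi hβθ hΛ he
    (fun n => smul_nonneg (by positivity) (nonneg_of_mem_strictlyPositiveCone (hg n)))
    (fun n => (hh1 n).le) (fun n => mul_nonneg (by positivity) (hε n)) hbe hr0
    (fun n => hres n ▸ (hA.ae_smul_sub_apply_eq hK hβ (hg n) _).le) hα hα0
  have hone := hns.norm.congr fun n => hh1 (ns n)
  rw [norm_zero] at hone
  exact one_ne_zero (tendsto_nhds_unique tendsto_const_nhds hone)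

lemma not_tendsto_zero_of_neg [NeZero π] (hA : IsUtilityOperator K ξ β θ A) (hp : p ≠ ⊤)
    (hK : IsPositivityImproving K) (hρ : 0 < specRad K) {i : ℕ} (hi : IsCompactOperator ⇑(K ^ i))
    (hθ : θ < 0) (hβ : 0 < β) (hΛ : 1 < β ^ θ * specRad K) (hξ : ∀ᵐ x ∂π, 0 < ξ x)
    {e : Lp ℝ p π} (he : 0 < e) {ε : ℕ → ℝ} (hε : ∀ n, 0 ≤ ε n) {g : ℕ → Lp ℝ p π}
    (hg : ∀ n, g n ∈ strictlyPositiveCone p π) (hfix : ∀ n, A (g n) + ε n • e = g n) :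
    ¬ Tendsto g atTop (𝓝 0) := by
  intro hg0
  obtain ⟨ns, -, hns⟩ := exists_subseq_tendsto_ae ((K.continuous.tendsto 0).comp hg0)
  refine hA.not_tendsto_ae_zero_of_neg hp hK hρ hi hθ hβ hΛ hξ he (fun n => hε (ns n))
    (fun n => hg (ns n)) (fun n => hfix (ns n)) ?_
  rw [map_zero] at hns
  filter_upwards [hns, Lp.coeFn_zero ℝ p π] with x hx hzero
  rwa [hzero] at hx

lemma exists_fixedPoint_of_neg [NeZero π] [IsFiniteMeasure π] (hA : IsUtilityOperator K ξ β θ A)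
    (hp : p ≠ ⊤) (hK : IsPositivityImproving K) (hρ : 0 < specRad K) {i : ℕ}
    (hi : IsCompactOperator ⇑(K ^ i)) (hθ : θ < 0) (hβ : 0 < β) (hξ₀ : 0 < ξ₀)
    (hξ : ∀ᵐ x ∂π, ξ₀ ≤ ξ x) (hΛ : 1 < β ^ θ * specRad K) :
    ∃ g ∈ strictlyPositiveCone p π, A g = g := by
  have hξpos : ∀ᵐ x ∂π, 0 < ξ x := hξ.mono fun x hx => hξ₀.trans_le hx
  have hone := const_mem_strictlyPositiveCone (p := p) (π := π) one_pos
  have hε0 (n : ℕ) : 0 < 1 / ((n : ℝ) + 1) := Nat.one_div_pos_of_nat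
  obtain ⟨f, hanti, hf⟩ := hA.exists_antitone_perturbed_fixedPoint hp hK hθ hβ hξ₀ hξ hone
    (fun _ _ hmn => Nat.one_div_le_one_div hmn) hε0
  have hf0 (n : ℕ) : 0 ≤ f n := nonneg_of_mem_strictlyPositiveCone (hf n).1
  obtain ⟨g, hfg⟩ := exists_tendsto_Lp_of_antitone hp hanti hf0
  have hgne : 0 ≠ g := by
    rintro rfl
    exact hA.not_tendsto_zero_of_neg hp hK hρ hi hθ hβ hΛ hξpos
      (pos_of_mem_strictlyPositiveCone hone) (fun n => (hε0 n).le) (fun n => (hf n).1)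
      (fun n => (hf n).2) hfg
  have : OrderClosedTopology (Lp ℝ p π) := HasSolidNorm.orderClosedTopology
  refine ⟨g, hA.fixedPoint_of_tendsto hK hβ hξpos (fun n => (hf n).1)
    ((ge_of_tendsto' hfg hf0).lt_of_ne hgne) hfg ?_⟩
  have hpert := hfg.sub (tendsto_one_div_add_atTop_nhds_zero_nat (𝕜 := ℝ).smul_const
    (Lp.const p π (1 : ℝ)))
  rw [zero_smul, sub_zero] at hpert
  exact hpert.congr fun n => sub_eq_of_eq_add (hf n).2.symm

end IsUtilityOperator

end Existence

section IndicatorConstLp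

lemma indicatorConstLp_pos {X : Type*} [MeasurableSpace X] {π : Measure X} {p : ℝ≥0∞}
    [Fact (1 ≤ p)] {s : Set X} (hs : MeasurableSet s) (hπs : π s ≠ ⊤) (hs0 : π s ≠ 0) {c : ℝ}
    (hc : 0 < c) : 0 < indicatorConstLp p hs hπs c := by
  refine lt_of_le_of_ne ((Lp.coeFn_nonneg _).1 ?_) (Ne.symm (norm_pos_iff.1 ?_))
  · filter_upwards [indicatorConstLp_coeFn (p := p) (hs := hs) (hμs := hπs) (c := c)] with x hx
    rw [hx]
    exact Set.indicator_nonneg (fun _ _ => hc.le) x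
  · rw [norm_indicatorConstLp' (one_pos.trans_le Fact.out).ne' hs0]
    exact mul_pos (norm_pos_iff.2 hc.ne') (Real.rpow_pos_of_pos (ENNReal.toReal_pos hs0 hπs) _)

lemma exists_indicatorConstLp_le_of_pos {X : Type*} [TopologicalSpace X] [T2Space X]
    [SigmaCompactSpace X] [MeasurableSpace X] [OpensMeasurableSpace X] {π : Measure X}
    [IsFiniteMeasureOnCompacts π] {p : ℝ≥0∞} {f : Lp ℝ p π} (hf : 0 < f) :
    ∃ (B C : Set X) (hB : MeasurableSet B) (hπB : π B ≠ ⊤) (δ : ℝ), IsCompact C ∧ B ⊆ C ∧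
      π B ≠ 0 ∧ 0 < δ ∧ indicatorConstLp p hB hπB δ ≤ f := by
  set S : ℕ × ℕ → Set X := fun m => {x | 1 / (m.1 + 1 : ℝ) < f x} ∩ compactCovering X m.2
  have hS (m : ℕ × ℕ) : MeasurableSet (S m) :=
    (measurableSet_lt measurable_const (Lp.stronglyMeasurable f).measurable).inter
      (isCompact_compactCovering X m.2).measurableSet
  have hcover : π (⋃ m, S m) ≠ 0 := by
    intro hnull
    refine hf.not_ge ((Lp.coeFn_le f 0).1 ?_)
    filter_upwards [measure_eq_zero_iff_ae_notMem.1 hnull, Lp.coeFn_zero ℝ p π] with x hx hzero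
    rw [hzero]
    by_contra! hpos
    obtain ⟨n, hn⟩ := exists_nat_one_div_lt hpos
    exact hx (Set.mem_iUnion.2 ⟨(n, _), hn, (exists_mem_compactCovering x).choose_spec⟩)
  obtain ⟨m, hm⟩ := exists_measure_pos_of_not_measure_iUnion_null hcover
  have hfin : π (S m) ≠ ⊤ :=
    measure_ne_top_of_subset Set.inter_subset_right
      (isCompact_compactCovering X m.2).measure_lt_top.ne
  refine ⟨S m, _, hS m, hfin, 1 / (m.1 + 1 : ℝ), isCompact_compactCovering X m.2,
    Set.inter_subset_right, hm.ne', Nat.one_div_pos_of_nat, (Lp.coeFn_le _ _).1 ?_⟩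
  filter_upwards [indicatorConstLp_coeFn (p := p) (hs := hS m) (hμs := hfin)
    (c := 1 / (m.1 + 1 : ℝ)), (Lp.coeFn_nonneg f).2 hf.le] with x hx hfx
  rw [hx]
  by_cases hxS : x ∈ S m
  · simpa only [Set.indicator_of_mem hxS] using hxS.1.le
  · rwa [Set.indicator_of_notMem hxS]

end IndicatorConstLp

section Kernel

variable {X : Type*} [MeasurableSpace X] {μ π : Measure X} {p : ℝ≥0∞}
  [Fact (1 ≤ p)] {k : X → X → ℝ} {K : Lp ℝ p π →L[ℝ] Lp ℝ p π}

lemma monotone_of_kernel (hμπ : μ ≪ π) (hk : ∀ x y, 0 < k x y)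
    (hK : ∀ g : Lp ℝ p π, K g =ᵐ[π] fun x => ∫ y, k x y * g y ∂μ) : Monotone K := by
  refine (monotone_iff_map_nonneg K).2 fun f hf => (Lp.coeFn_nonneg _).1 ?_
  filter_upwards [hK f] with x hx
  rw [hx]
  refine integral_nonneg_of_ae ?_
  filter_upwards [hμπ.ae_le ((Lp.coeFn_nonneg f).2 hf)] with y hy
  exact mul_nonneg (hk x y).le hy

lemma map_indicatorConstLp_of_kernel (hμπ : μ ≪ π)
    (hK : ∀ g : Lp ℝ p π, K g =ᵐ[π] fun x => ∫ y, k x y * g y ∂μ) {B : Set X}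
    (hB : MeasurableSet B) (hπB : π B ≠ ⊤) (c : ℝ) :
    K (indicatorConstLp p hB hπB c) =ᵐ[π] fun x => (∫ y in B, k x y ∂μ) * c := by
  filter_upwards [hK (indicatorConstLp p hB hπB c)] with x hx
  rw [hx, ← integral_mul_const, ← integral_indicator hB]
  refine integral_congr_ae ?_
  filter_upwards [hμπ.ae_le (indicatorConstLp_coeFn (p := p) (hs := hB) (hμs := hπB) (c := c))]
    with y hy
  rw [hy]
  by_cases hyB : y ∈ B <;> simp [hyB]

variable [TopologicalSpace X]

lemma integrableOn_kernel [OpensMeasurableSpace X] [T2Space X] [IsFiniteMeasureOnCompacts μ]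
    (hk_cont : Continuous (Function.uncurry k)) {B C : Set X} (hBC : B ⊆ C) (hC : IsCompact C)
    (x : X) : IntegrableOn (k x) B μ :=
  ((hk_cont.comp (Continuous.prodMk_right x)).continuousOn.integrableOn_compact hC).mono_set hBC

variable [T2Space X] [SigmaCompactSpace X] [OpensMeasurableSpace X]
  [IsFiniteMeasureOnCompacts μ] [IsFiniteMeasureOnCompacts π]

theorem isPositivityImproving_of_kernel (hμπ : μ ≪ π) (hπμ : π ≪ μ)
    (hk_cont : Continuous (Function.uncurry k)) (hk : ∀ x y, 0 < k x y)
    (hK : ∀ g : Lp ℝ p π, K g =ᵐ[π] fun x => ∫ y, k x y * g y ∂μ) : IsPositivityImproving K := by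
  intro f hf
  obtain ⟨B, C, hB, hπB, δ, hC, hBC, hB0, hδ, hle⟩ := exists_indicatorConstLp_le_of_pos hf
  refine isUpperSet_strictlyPositiveCone (monotone_of_kernel hμπ hk hK hle) ?_
  filter_upwards [map_indicatorConstLp_of_kernel hμπ hK hB hπB δ] with x hx
  rw [hx]
  refine mul_pos ?_ hδ
  rw [setIntegral_pos_iff_support_of_nonneg_ae (.of_forall fun y => (hk x y).le)
    (integrableOn_kernel hk_cont hBC hC x), Function.support_eq_univ (fun y => (hk x y).ne'),
    Set.univ_inter]
  exact pos_iff_ne_zero.2 (mt (@hπμ B) hB0)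

theorem specRad_pos_of_kernel [NeZero π] (hμπ : μ ≪ π) (hπμ : π ≪ μ)
    (hk_cont : Continuous (Function.uncurry k)) (hk : ∀ x y, 0 < k x y)
    (hK : ∀ g : Lp ℝ p π, K g =ᵐ[π] fun x => ∫ y, k x y * g y ∂μ) : 0 < specRad K := by
  obtain ⟨n, hn⟩ : ∃ n, 0 < π (compactCovering X n) := by
    refine exists_measure_pos_of_not_measure_iUnion_null ?_
    rw [iUnion_compactCovering]
    exact NeZero.ne _
  set C := compactCovering X n
  have hC : IsCompact C := isCompact_compactCovering X n
  have hπC : π C ≠ ⊤ := hC.measure_lt_top.ne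
  have hμC : 0 < μ.real C := ENNReal.toReal_pos (mt (@hπμ C) hn.ne') hC.measure_lt_top.ne
  obtain ⟨κ, hκ, hκk⟩ : ∃ κ, 0 < κ ∧ ∀ z ∈ C ×ˢ C, κ ≤ Function.uncurry k z :=
    (hC.prod hC).exists_forall_le' hk_cont.continuousOn fun z _ => hk z.1 z.2
  set f : Lp ℝ p π := indicatorConstLp p hC.measurableSet hπC 1
  have hf : 0 < f := indicatorConstLp_pos hC.measurableSet hπC hn.ne' one_pos
  refine (mul_pos hκ hμC).trans_le (le_specRad_of_smul_le (monotone_of_kernel hμπ hk hK)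
    (by positivity) hf ((Lp.coeFn_le _ _).1 ?_))
  filter_upwards [map_indicatorConstLp_of_kernel hμπ hK hC.measurableSet hπC 1,
    indicatorConstLp_coeFn (p := p) (hs := hC.measurableSet) (hμs := hπC) (c := (1 : ℝ)),
    Lp.coeFn_smul (κ * μ.real C) f] with x hKx hfx hsmul
  rw [hKx, hsmul, Pi.smul_apply, hfx]
  by_cases hx : x ∈ C
  · have hle := setIntegral_ge_of_const_le_real (μ := μ) hC.measurableSet hC.measure_ne_top
      (fun y hy => hκk (x, y) ⟨hx, hy⟩) (integrableOn_kernel hk_cont subset_rfl hC x)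
    simpa [hx] using hle
  · simpa [hx] using integral_nonneg fun y => (hk x y).le

end Kernel

section EquivalentMeasure

lemma isFiniteMeasureOnCompacts_of_withDensity_ofReal {X : Type*} [TopologicalSpace X]
    [MeasurableSpace X] [OpensMeasurableSpace X] {μ : Measure X} {d : X → ℝ} (hd : Continuous d)
    (hd_pos : ∀ x, 0 < d x)
    [IsLocallyFiniteMeasure (μ.withDensity fun x => ENNReal.ofReal (d x))] :
    IsFiniteMeasureOnCompacts μ := by
  have hμ : (μ.withDensity fun x => ENNReal.ofReal (d x)).withDensity
      (fun x => ENNReal.ofReal (d x)⁻¹) = μ := by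
    simp_rw [ENNReal.ofReal_inv_of_pos (hd_pos _)]
    exact withDensity_inv_same hd.measurable.ennreal_ofReal
      (.of_forall fun x => (ENNReal.ofReal_pos.2 (hd_pos x)).ne')
      (.of_forall fun x => ENNReal.ofReal_ne_top)
  have hfin : IsLocallyFiniteMeasure μ :=
    hμ ▸ IsLocallyFiniteMeasure.withDensity_ofReal (hd.inv₀ fun x => (hd_pos x).ne')
  infer_instance

end EquivalentMeasure

section RecursiveUtility

lemma neZero_of_specRad_pos {X : Type*} [MeasurableSpace X] {π : Measure X} {p : ℝ≥0∞}
    [Fact (1 ≤ p)] {K : Lp ℝ p π →L[ℝ] Lp ℝ p π} (hK : 0 < specRad K) : NeZero π := by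
  refine ⟨fun hπ => hK.not_ge ?_⟩
  subst hπ
  have hK0 : K = 0 := by
    ext1 f
    exact Lp.ext (by rw [ae_zero]; trivial)
  simpa [hK0] using specRad_le_norm_pow_rpow K 0

theorem recursive_utility_unbounded_tfae_general {X : Type*} [MeasurableSpace X] {π : Measure X}
    [IsFiniteMeasure π] {p : ℝ≥0∞} [Fact (1 ≤ p)] (hp : p ≠ ⊤) {K : Lp ℝ p π →L[ℝ] Lp ℝ p π}
    (hK : IsPositivityImproving K) (hρ : 0 < specRad K) {i : ℕ} (hi : IsCompactOperator ⇑(K ^ i))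
    {β θ ξ₀ ξ₁ : ℝ} (hβ : 0 < β) (hθ : θ ≠ 0) (hξ₀ : 0 < ξ₀) {ξ : X → ℝ}
    (hξ : ∀ᵐ x ∂π, ξ x ∈ Set.Icc ξ₀ ξ₁) {A : Lp ℝ p π → Lp ℝ p π}
    (hA : IsUtilityOperator K ξ β θ A) :
    List.TFAE
      [β * specRad K ^ (1 / θ) < 1,
        ∃ g ∈ strictlyPositiveCone p π, A g = g,
        ∃ g ∈ strictlyPositiveCone p π, ∃ glim ∈ strictlyPositiveCone p π,
          Tendsto (fun n => A^[n] g) atTop (𝓝 glim)] := by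
  have : NeZero π := neZero_of_specRad_pos hρ
  have hξge : ∀ᵐ x ∂π, ξ₀ ≤ ξ x := hξ.mono fun x hx => hx.1
  have hξpos : ∀ᵐ x ∂π, 0 < ξ x := hξge.mono fun x hx => hξ₀.trans_le hx
  tfae_have 1 → 2 := by
    intro hΛ
    obtain hneg | hpos := hθ.lt_or_gt
    · exact hA.exists_fixedPoint_of_neg hp hK hρ hi hneg hβ hξ₀ hξge
        ((mul_rpow_one_div_lt_one_iff_of_neg hneg hβ hρ).1 hΛ)
    · exact hA.exists_fixedPoint_of_pos hp hK hpos hβ hξ₀ hξ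
        ((mul_rpow_one_div_lt_one_iff_of_pos hpos hβ hρ).1 hΛ)
  tfae_have 2 → 3
  | ⟨g, hg, hfix⟩ => ⟨g, hg, g, hg, by simp only [Function.iterate_fixed hfix, tendsto_const_nhds]⟩
  tfae_have 3 → 2
  | ⟨_, hg, glim, hglim, hlim⟩ =>
    ⟨glim, hglim, hA.fixedPoint_of_tendsto_iterate hK hβ hξpos hg hglim hlim⟩
  tfae_have 2 → 1
  | ⟨_, hg, hfix⟩ => hA.lt_one_of_fixedPoint hp hK hρ hi hβ hθ hξpos hg hfix
  tfae_finish

end RecursiveUtility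

/-- **Existence and uniqueness of recursive utility on an unbounded
(σ-compact) state space.**  Let `X` be a σ-compact metric space, `μ` a σ-finite
Borel measure with full support, `π` a Borel probability measure with a
continuous everywhere strictly positive density `d` with respect to `μ`,
`p ∈ [1, ∞)`, `k` continuous and strictly positive, and suppose the integral
operator `K` on `L_p(X,π)` is bounded and eventually compact (`K^i` compact for
some `i`).  With `ξ` continuous and bounded between positive constants
`ξ₀ ≤ ξ₁`, and `A` the operator `(A g)(x) = (ξ(x) + β (K g(x))^(1/θ))^θ`, the
following are equivalent: (a) `Λ_p = β ρ(K)^(1/θ) < 1`; (b) `A` has a fixed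
point in `L_p(X,π)_+`; (c) some iterate sequence `(A^n g)` from the cone
converges in `L_p` norm to an element of `L_p(X,π)_+`. -/
theorem recursive_utility_unbounded_tfae
    {X : Type*} [MetricSpace X] [SigmaCompactSpace X] [MeasurableSpace X] [BorelSpace X]
    (μ π : Measure X) [SigmaFinite μ] [μ.IsOpenPosMeasure] [IsProbabilityMeasure π]
    (d : X → ℝ) (hd_cont : Continuous d) (hd_pos : ∀ x, 0 < d x)
    (hπ : π = μ.withDensity (fun x => ENNReal.ofReal (d x)))
    (p : ℝ≥0∞) [Fact (1 ≤ p)] (hp_top : p ≠ ⊤)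
    (k : X → X → ℝ) (hk_cont : Continuous (Function.uncurry k))
    (hk_pos : ∀ x y, 0 < k x y)
    (K : Lp ℝ p π →L[ℝ] Lp ℝ p π)
    (hK : ∀ g : Lp ℝ p π, (K g : X → ℝ) =ᵐ[π] fun x => ∫ y, k x y * g y ∂μ)
    (hK_evcompact : ∃ i : ℕ, 0 < i ∧ IsCompactOperator ⇑(K ^ i))
    (β θ : ℝ) (hβ0 : 0 < β) (hβ1 : β < 1) (hθ : θ ≠ 0)
    (ξ : X → ℝ) (hξ_cont : Continuous ξ)
    (ξ₀ ξ₁ : ℝ) (hξ₀ : 0 < ξ₀) (hξ₀₁ : ξ₀ ≤ ξ₁)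
    (hξ_bdd : ∀ x, ξ₀ ≤ ξ x ∧ ξ x ≤ ξ₁)
    (A : Lp ℝ p π → Lp ℝ p π)
    (hA : ∀ g : Lp ℝ p π, (∀ᵐ x ∂π, 0 < g x) →
      (A g : X → ℝ) =ᵐ[π] fun x => (ξ x + β * ((K g : X → ℝ) x) ^ (1 / θ)) ^ θ) :
    List.TFAE
      [ β * specRad K ^ (1 / θ) < 1,
        ∃ g : Lp ℝ p π, (∀ᵐ x ∂π, 0 < g x) ∧ A g = g,
        ∃ g : Lp ℝ p π, (∀ᵐ x ∂π, 0 < g x) ∧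
          ∃ glim : Lp ℝ p π, (∀ᵐ x ∂π, 0 < glim x) ∧
            Tendsto (fun n => A^[n] g) atTop (𝓝 glim) ] := by
  subst hπ
  have hμπ : μ ≪ μ.withDensity fun x => ENNReal.ofReal (d x) :=
    withDensity_absolutelyContinuous' hd_cont.measurable.ennreal_ofReal.aemeasurable
      (.of_forall fun x => (ENNReal.ofReal_pos.2 (hd_pos x)).ne')
  have hπμ := withDensity_absolutelyContinuous μ fun x => ENNReal.ofReal (d x)
  have := isFiniteMeasureOnCompacts_of_withDensity_ofReal (μ := μ) hd_cont hd_pos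
  obtain ⟨i, -, hi⟩ := hK_evcompact
  exact recursive_utility_unbounded_tfae_general hp_top
    (isPositivityImproving_of_kernel hμπ hπμ hk_cont hk_pos hK)
    (specRad_pos_of_kernel hμπ hπμ hk_cont hk_pos hK) hi hβ0 hθ hξ₀ (.of_forall hξ_bdd) hA
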